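/- For every real number c with 16/17 < c < 1, one has limsup_{x→∞} T_c(x)/π(x) < 1/2; that is, there exist δ > 0 and x₀ such that T_c(x) ≤ (1/2 − δ)·π(x) for all x ≥ x₀. -/

import Mathlib

open Real Finset

attribute [local instance] Classical.propDecidable

/-- `Pplus n` is the largest prime factor of `n`, with the convention `Pplus 1 = 1`. -/
noncomputable def Pplus (n : ℕ) : ℕ := if n = 1 then 1 else n.primeFactors.sup id

/-- `primePi x` is the number of primes not exceeding `x`. -/
noncomputable def primePi (x : ℝ) : ℕ :=
  ((Finset.range (⌊x⌋₊ + 1)).filter Nat.Prime).card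

/-- `T c x = #{p ≤ x : p prime, P⁺(p-1) ≥ p^c}`. -/
noncomputable def T (c x : ℝ) : ℕ :=
  ((Finset.range (⌊x⌋₊ + 1)).filter
    (fun p : ℕ => p.Prime ∧ (p : ℝ) ^ c ≤ (Pplus (p - 1) : ℝ))).card

/-!
A prime `p ≤ x` counted by `T c x` has the form `p = a * q + 1` with `q` prime and
`a ≤ x ^ (1 - c)`. For fixed `a`, Selberg's sieve bounds the number of `n ≤ x / a` with `n` and
`a * n + 1` both free of small primes by about `8 * (x / a) / log (x / a) ^ 2` times a singular
series. Running the sieve in the residue classes modulo `W = w!` in which `n` and `a * n + 1` are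
coprime to `W` turns the average of the singular series over `a` into an elementary count modulo
`W`: it is `1` up to a factor tending to `1` as `w → ∞`. Since `1 / (a * log (x / a) ^ 2)` is
the derivative of `1 / log (x / a)` in `a`, summation over `a` gives
`T c x ≤ (8 * (1 / c - 1) + o(1)) * x / log x`. The lower bound `π(x) ≥ (1 - o(1)) * x / log x`
comes from the non-vanishing of `ζ` on `Re s = 1` by the Wiener–Ikehara method with the Fejér
kernel. Finally `8 * (1 / c - 1) < 1 / 2` exactly when `c > 16 / 17`.
-/

section Tauberian

open MeasureTheory Filter Topology Complex

/-- The unnormalised Fejér kernel, i.e. the Fourier transform of the triangle function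
`t ↦ 1 - |t| / l` on `[-l, l]`. At `v = 0` it takes the junk value `0` instead of `l`. -/
noncomputable def fejerKernel (l v : ℝ) : ℝ := 2 * (1 - Real.cos (l * v)) / (l * v ^ 2)

lemma fejerKernel_nonneg {l : ℝ} (hl : 0 < l) (v : ℝ) : 0 ≤ fejerKernel l v :=
  div_nonneg (by linarith [Real.cos_le_one (l * v)]) (by positivity)

lemma fejerKernel_le {l : ℝ} (hl : 0 < l) (v : ℝ) :
    fejerKernel l v ≤ (l + 4 / l) * (1 + v ^ 2)⁻¹ := by
  unfold fejerKernel
  rcases eq_or_ne v 0 with rfl | hv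
  · simp only [ne_eq, OfNat.ofNat_ne_zero, not_false_eq_true, zero_pow, mul_zero, div_zero]
    positivity
  have hcos_quad := Real.one_sub_sq_div_two_le_cos (x := l * v)
  have hcos_low := Real.neg_one_le_cos (l * v)
  have : 0 < v ^ 2 := by positivity
  rw [← div_eq_mul_inv, div_le_div_iff₀ (by positivity) (by positivity),
    show (l + 4 / l) * (l * v ^ 2) = (l * v) ^ 2 + 4 * v ^ 2 by field_simp]
  nlinarith

lemma fejerKernel_le_of_lt_abs {l h : ℝ} (hl : 0 < l) (hh : 0 < h) {v : ℝ} (hv : h < |v|) :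
    fejerKernel l v ≤ (4 / l * (1 + 1 / h ^ 2)) * (1 + v ^ 2)⁻¹ := by
  have hv2 : h ^ 2 ≤ v ^ 2 := by rw [← sq_abs v]; gcongr
  have hv0 : 0 < v ^ 2 := lt_of_lt_of_le (by positivity) hv2
  have hratio : 1 ≤ 1 / h ^ 2 * v ^ 2 := by
    rwa [one_div, inv_mul_eq_div, one_le_div (by positivity)]
  calc fejerKernel l v ≤ 4 / (l * v ^ 2) := by
        unfold fejerKernel
        gcongr
        linarith [Real.neg_one_le_cos (l * v)]
    _ ≤ _ := by
        rw [← div_eq_mul_inv, div_le_div_iff₀ (by positivity) (by positivity)]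
        calc 4 * (1 + v ^ 2) ≤ 4 * ((1 + 1 / h ^ 2) * v ^ 2) := by linarith
          _ = _ := by field_simp

lemma measurable_fejerKernel (l : ℝ) : Measurable (fejerKernel l) := by
  unfold fejerKernel; fun_prop

lemma integrable_fejerKernel {l : ℝ} (hl : 0 < l) : Integrable (fejerKernel l) := by
  refine (integrable_inv_one_add_sq.const_mul (l + 4 / l)).mono'
    (measurable_fejerKernel l).aestronglyMeasurable (Eventually.of_forall fun v => ?_)
  rw [Real.norm_of_nonneg (fejerKernel_nonneg hl v)]
  exact fejerKernel_le hl v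

lemma integral_fejerKernel {l : ℝ} (hl : 0 < l) :
    ∫ v, fejerKernel l v = ∫ v, fejerKernel 1 v := by
  have hscale (v : ℝ) : fejerKernel l v = l * fejerKernel 1 (l * v) := by
    unfold fejerKernel
    rcases eq_or_ne v 0 with rfl | hv
    · simp
    · field_simp
  simp_rw [hscale]
  rw [integral_const_mul, Measure.integral_comp_mul_left, abs_of_pos (inv_pos.2 hl), smul_eq_mul]
  field_simp

lemma integral_fejerKernel_one_pos : 0 < ∫ v, fejerKernel 1 v := by
  rw [integral_pos_iff_support_of_nonneg (fun v => fejerKernel_nonneg one_pos v)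
    (integrable_fejerKernel one_pos)]
  refine lt_of_lt_of_le (by simp) (measure_mono (s := Set.Ioo (0 : ℝ) 1) fun v hv => ?_)
  have hcos : Real.cos (1 * v) < 1 := by
    rw [one_mul, ← Real.cos_zero]
    exact Real.cos_lt_cos_of_nonneg_of_le_pi_div_two le_rfl
      (by linarith [hv.2, Real.pi_gt_three]) hv.1
  have hv0 := hv.1
  exact (div_pos (by linarith) (by positivity) : 0 < fejerKernel 1 v).ne'

lemma integral_one_sub_div_mul_cos {l v : ℝ} (hl : l ≠ 0) (hv : v ≠ 0) :
    ∫ t in (0 : ℝ)..l, (1 - t / l) * Real.cos (v * t) =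
      (1 - Real.cos (l * v)) / (l * v ^ 2) := by
  have hderiv : ∀ t ∈ Set.uIcc 0 l, HasDerivAt
      (fun t => (1 - t / l) * (Real.sin (v * t) / v) - Real.cos (v * t) / (l * v ^ 2))
      ((1 - t / l) * Real.cos (v * t)) t := by
    intro t _
    have hlin : HasDerivAt (fun t : ℝ => v * t) v t := by
      simpa using (hasDerivAt_id t).const_mul v
    have htri : HasDerivAt (fun t : ℝ => 1 - t / l) (-(1 / l)) t := by
      simpa using ((hasDerivAt_id t).div_const l).const_sub 1
    refine ((htri.mul (hlin.sin.div_const v)).sub (hlin.cos.div_const (l * v ^ 2))).congr_deriv ?_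
    field_simp
    ring
  rw [intervalIntegral.integral_eq_sub_of_hasDerivAt hderiv
    (Continuous.intervalIntegrable (by fun_prop) _ _), mul_comm l v]
  simp only [div_self hl, sub_self, zero_mul, zero_sub, zero_div, sub_zero, mul_zero,
    Real.sin_zero, Real.cos_zero]
  ring

lemma integral_triangle_mul_cexp {l v : ℝ} (hl : 0 < l) (hv : v ≠ 0) :
    ∫ t in (-l)..l, ((1 - |t| / l : ℝ) : ℂ) * cexp (I * v * t) = (fejerKernel l v : ℂ) := by
  have hcont : Continuous fun t : ℝ => ((1 - |t| / l : ℝ) : ℂ) * cexp (I * v * t) := by fun_prop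
  have hcont' : Continuous fun t : ℝ => ((1 - |t| / l : ℝ) : ℂ) * cexp (-(I * v * t)) := by
    fun_prop
  have hreflect : ∫ t in (-l)..0, ((1 - |t| / l : ℝ) : ℂ) * cexp (I * v * t)
      = ∫ t in (0 : ℝ)..l, ((1 - |t| / l : ℝ) : ℂ) * cexp (-(I * v * t)) := by
    simpa using (intervalIntegral.integral_comp_neg (a := 0) (b := l)
      (fun t : ℝ => ((1 - |t| / l : ℝ) : ℂ) * cexp (I * v * t))).symm
  have hcos : Set.EqOn (fun t : ℝ => ((1 - |t| / l : ℝ) : ℂ) * cexp (-(I * v * t)) +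
        ((1 - |t| / l : ℝ) : ℂ) * cexp (I * v * t))
      (fun t => ((2 * ((1 - t / l) * Real.cos (v * t)) : ℝ) : ℂ)) (Set.uIcc 0 l) := by
    intro t ht
    rw [Set.uIcc_of_le hl.le] at ht
    simp only [abs_of_nonneg ht.1]
    push_cast
    rw [Complex.cos]
    ring_nf
  rw [← intervalIntegral.integral_add_adjacent_intervals (b := 0)
      (hcont.intervalIntegrable _ _) (hcont.intervalIntegrable _ _), hreflect,
    ← intervalIntegral.integral_add (hcont'.intervalIntegrable _ _) (hcont.intervalIntegrable _ _),
    intervalIntegral.integral_congr hcos, intervalIntegral.integral_ofReal,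
    intervalIntegral.integral_const_mul, integral_one_sub_div_mul_cos hl.ne' hv, fejerKernel,
    mul_div_assoc]

lemma norm_triangle_mul_cexp_le_one {l t : ℝ} (ht : |t| ≤ l) (y : ℝ) :
    ‖((1 - |t| / l : ℝ) : ℂ) * cexp (I * y * t)‖ ≤ 1 := by
  have hle : |t| / l ≤ 1 := div_le_one_of_le₀ ht ((abs_nonneg t).trans ht)
  have hnonneg : 0 ≤ |t| / l := div_nonneg (abs_nonneg t) ((abs_nonneg t).trans ht)
  rw [show I * y * t = ((y * t : ℝ) : ℂ) * I by push_cast; ring, norm_mul,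
    Complex.norm_exp_ofReal_mul_I, Complex.norm_real, Real.norm_eq_abs, mul_one, abs_le]
  constructor <;> linarith

/-- `f` is a measurable function, bounded by `C` and vanishing on `(-∞, 0]`, whose Laplace
transform on `0 < Re s` extends to a continuous function `F` on `0 ≤ Re s`. These are the
hypotheses of the Wiener–Ikehara method. -/
structure HasContinuousLaplace (f : ℝ → ℝ) (C : ℝ) (F : ℂ → ℂ) : Prop where
  measurable : Measurable f
  abs_le : ∀ u, |f u| ≤ C
  eq_zero : ∀ u ≤ 0, f u = 0
  continuousOn : ContinuousOn F {s | 0 ≤ s.re}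
  laplace : ∀ s : ℂ, 0 < s.re → ∫ u, (f u : ℂ) * cexp (-s * u) = F s

namespace HasContinuousLaplace

variable {f : ℝ → ℝ} {C : ℝ} {F : ℂ → ℂ} {l : ℝ}

lemma integrable_mul_exp (hf : HasContinuousLaplace f C F) {ε : ℝ} (hε : 0 < ε) :
    Integrable fun u : ℝ => f u * Real.exp (-ε * u) := by
  have hIoi : IntegrableOn (fun u : ℝ => f u * Real.exp (-ε * u)) (Set.Ioi 0) :=
    Integrable.bdd_mul (integrableOn_exp_mul_Ioi (by linarith) 0)
      hf.measurable.aestronglyMeasurable (Eventually.of_forall hf.abs_le)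
  refine (integrableOn_iff_integrable_of_support_subset fun u hu => ?_).1 hIoi
  by_contra hu0
  exact hu (by simp only [hf.eq_zero u (not_lt.1 hu0), zero_mul])

lemma integrable_mul_fejerKernel (hf : HasContinuousLaplace f C F) (hl : 0 < l) (y : ℝ) :
    Integrable fun u => f u * fejerKernel l (y - u) :=
  ((integrable_fejerKernel hl).comp_sub_left y).bdd_mul hf.measurable.aestronglyMeasurable
    (Eventually.of_forall hf.abs_le)

lemma integral_triangle_mul_of_pos (hf : HasContinuousLaplace f C F) (hl : 0 < l) {ε : ℝ}
    (hε : 0 < ε) (y : ℝ) :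
    ∫ t in (-l)..l, ((1 - |t| / l : ℝ) : ℂ) * cexp (I * y * t) * F (ε + I * t)
      = ∫ u, ((f u * Real.exp (-ε * u) * fejerKernel l (y - u) : ℝ) : ℂ) := by
  have hlaplace (t : ℝ) : F (ε + I * t) = ∫ u, (f u : ℂ) * cexp (-(ε + I * t) * u) :=
    (hf.laplace _ (by simpa using hε)).symm
  have htri : Integrable (fun t : ℝ => 1 - |t| / l) (volume.restrict (Set.Ioc (-l) l)) :=
    Continuous.integrableOn_Ioc (by fun_prop)
  have hae : ∀ᵐ u : ℝ, u ≠ y := by simp [ae_iff, measure_singleton]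
  rw [intervalIntegral.integral_of_le (by linarith)]
  simp_rw [hlaplace, ← integral_const_mul]
  rw [integral_integral_swap]
  · refine integral_congr_ae ?_
    filter_upwards [hae] with u hu
    rw [← intervalIntegral.integral_of_le (by linarith)]
    push_cast
    rw [← integral_triangle_mul_cexp hl (sub_ne_zero.2 hu.symm),
      ← intervalIntegral.integral_const_mul]
    congr 1; ext t
    have hexp : cexp (I * y * t) * cexp (-(ε + I * t) * u)
        = cexp (-ε * u) * cexp (I * ((y - u : ℝ) : ℂ) * t) := by
      rw [← Complex.exp_add, ← Complex.exp_add]; push_cast; ring_nf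
    push_cast at hexp ⊢
    linear_combination ((1 - |t| / l) * f u : ℂ) * hexp
  · refine (htri.mul_prod (hf.integrable_mul_exp hε)).mono ?_ (Eventually.of_forall fun z => ?_)
    · have := hf.measurable
      apply Measurable.aestronglyMeasurable
      simp only [Function.uncurry_def]
      fun_prop
    · simp only [Function.uncurry_def, norm_mul, Complex.norm_real, Complex.norm_exp]
      simp

lemma tendsto_integral_triangle_mul (hf : HasContinuousLaplace f C F) (hl : 0 < l) (y : ℝ) :
    Tendsto (fun ε : ℝ => ∫ t in (-l)..l,
      ((1 - |t| / l : ℝ) : ℂ) * cexp (I * y * t) * F (ε + I * t)) (𝓝[>] 0)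
      (𝓝 (∫ t in (-l)..l, ((1 - |t| / l : ℝ) : ℂ) * cexp (I * y * t) * F (I * t))) := by
  have hcont : ContinuousOn (fun p : ℝ × ℝ => F (p.1 + I * p.2))
      (Set.Icc 0 1 ×ˢ Set.Icc (-l) l) :=
    hf.continuousOn.comp (by fun_prop) fun p hp => by simpa using hp.1.1
  have hslice (ε : ℝ) (hε : ε ∈ Set.Icc (0 : ℝ) 1) :
      ContinuousOn (fun t : ℝ => F (ε + I * t)) (Set.Icc (-l) l) :=
    hcont.comp (f := fun t : ℝ => (ε, t)) (by fun_prop) fun t ht => ⟨hε, ht⟩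
  obtain ⟨B, hB⟩ := (isCompact_Icc.prod isCompact_Icc).exists_bound_of_continuousOn hcont
  have hsmall : ∀ᶠ ε : ℝ in 𝓝[>] 0, ε ∈ Set.Icc (0 : ℝ) 1 :=
    mem_of_superset (Ioo_mem_nhdsGT one_pos) Set.Ioo_subset_Icc_self
  simp_rw [intervalIntegral.integral_of_le (show -l ≤ l by linarith)]
  refine tendsto_integral_filter_of_dominated_convergence (fun _ => B) ?_ ?_
    (integrable_const B) ?_
  · filter_upwards [hsmall] with ε hε
    refine AEStronglyMeasurable.mul (by fun_prop) ?_
    exact ((hslice ε hε).mono Set.Ioc_subset_Icc_self).aestronglyMeasurable measurableSet_Ioc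
  · filter_upwards [hsmall] with ε hε
    filter_upwards [ae_restrict_mem measurableSet_Ioc] with t ht
    calc _ ≤ 1 * B := by
          rw [norm_mul]
          gcongr
          · exact norm_triangle_mul_cexp_le_one (_root_.abs_le.2 ⟨ht.1.le, ht.2⟩) y
          · exact hB (ε, t) ⟨hε, ht.1.le, ht.2⟩
      _ = B := one_mul B
  · refine Eventually.of_forall fun t => Tendsto.const_mul _ ?_
    have hwithin : ContinuousWithinAt (fun ε : ℝ => F (ε + I * t)) (Set.Ici 0) 0 :=
      ContinuousWithinAt.comp (t := {s : ℂ | 0 ≤ s.re}) (hf.continuousOn _ (by simp))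
        (by fun_prop) fun ε hε => by simpa using hε
    simpa using hwithin.tendsto.mono_left (nhdsWithin_mono 0 Set.Ioi_subset_Ici_self)

lemma tendsto_integral_mul_exp_mul_fejerKernel (hf : HasContinuousLaplace f C F) (hl : 0 < l)
    (y : ℝ) :
    Tendsto (fun ε : ℝ => ∫ u, ((f u * Real.exp (-ε * u) * fejerKernel l (y - u) : ℝ) : ℂ))
      (𝓝[>] 0) (𝓝 (∫ u, ((f u * fejerKernel l (y - u) : ℝ) : ℂ))) := by
  refine tendsto_integral_filter_of_dominated_convergence
    (fun u => C * fejerKernel l (y - u)) ?_ ?_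
    (((integrable_fejerKernel hl).comp_sub_left y).const_mul _) ?_
  · refine Eventually.of_forall fun ε => ?_
    have := hf.measurable
    have := measurable_fejerKernel l
    exact (by fun_prop : Measurable _).aestronglyMeasurable
  · filter_upwards [self_mem_nhdsWithin] with ε hε
    refine Eventually.of_forall fun u => ?_
    rw [Complex.norm_real, norm_mul, norm_mul, Real.norm_of_nonneg (fejerKernel_nonneg hl _),
      Real.norm_of_nonneg (Real.exp_pos _).le, Real.norm_eq_abs]
    refine mul_le_mul_of_nonneg_right ?_ (fejerKernel_nonneg hl _)
    rcases lt_or_ge 0 u with hu | hu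
    · refine (mul_le_of_le_one_right (abs_nonneg _) ?_).trans (hf.abs_le u)
      rw [Real.exp_le_one_iff, neg_mul, neg_nonpos]
      exact (mul_pos hε hu).le
    · simpa [hf.eq_zero u hu] using (abs_nonneg _).trans (hf.abs_le u)
  · refine Eventually.of_forall fun u => ?_
    have hcont : Continuous
        fun ε : ℝ => ((f u * Real.exp (-ε * u) * fejerKernel l (y - u) : ℝ) : ℂ) := by fun_prop
    simpa using (hcont.tendsto 0).mono_left (nhdsWithin_le_nhds (s := Set.Ioi (0 : ℝ)))

lemma integral_triangle_mul (hf : HasContinuousLaplace f C F) (hl : 0 < l) (y : ℝ) :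
    ∫ t in (-l)..l, ((1 - |t| / l : ℝ) : ℂ) * cexp (I * y * t) * F (I * t)
      = ∫ u, ((f u * fejerKernel l (y - u) : ℝ) : ℂ) := by
  refine tendsto_nhds_unique (hf.tendsto_integral_triangle_mul hl y)
    ((hf.tendsto_integral_mul_exp_mul_fejerKernel hl y).congr' ?_)
  filter_upwards [self_mem_nhdsWithin] with ε hε
  exact (hf.integral_triangle_mul_of_pos hl hε y).symm

-- By `integral_triangle_mul` the convolution is the Fourier transform of a function supported
-- on `[-l, l]`, so this is the Riemann–Lebesgue lemma.
lemma tendsto_integral_mul_fejerKernel (hf : HasContinuousLaplace f C F) (hl : 0 < l) :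
    Tendsto (fun y : ℝ => ∫ u, f u * fejerKernel l (y - u)) atTop (𝓝 0) := by
  set g : ℝ → ℂ := (Set.Ioc (-l) l).indicator
    (fun t : ℝ => ((1 - |t| / l : ℝ) : ℂ) * F (I * t)) with hg
  have hfreq : Tendsto (fun y : ℝ => -(y / (2 * π))) atTop (cocompact ℝ) := by
    rw [_root_.cocompact_eq_atBot_atTop]
    exact (tendsto_neg_atTop_atBot.comp (tendsto_id.atTop_div_const (by positivity))).mono_right
      le_sup_left
  have hcomplex : Tendsto (fun y : ℝ => ((∫ u, f u * fejerKernel l (y - u) : ℝ) : ℂ))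
      atTop (𝓝 0) := by
    refine ((Real.tendsto_integral_exp_smul_cocompact g).comp hfreq).congr fun y => ?_
    refine Eq.trans ?_ ((hf.integral_triangle_mul hl y).trans integral_ofReal)
    rw [intervalIntegral.integral_of_le (by linarith), ← integral_indicator measurableSet_Ioc]
    simp only [Function.comp]
    congr 1; ext t
    by_cases ht : t ∈ Set.Ioc (-l) l
    · have hphase : ((2 * π * -(t * -(y / (2 * π))) : ℝ) : ℂ) * I = I * y * t := by
        have hpi : (π : ℂ) ≠ 0 := by exact_mod_cast Real.pi_ne_zero
        push_cast; field_simp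
      simp only [hg, Set.indicator_of_mem ht]
      rw [Circle.smul_def, Real.fourierChar_apply, smul_eq_mul, hphase]
      ring
    · simp only [hg, Set.indicator_of_notMem ht, smul_zero]
  simpa [Function.comp_def] using (Complex.continuous_re.tendsto 0).comp hcomplex

variable {S : ℝ → ℝ}

lemma fejerKernel_add_mul_le (hf : HasContinuousLaplace f C F) (hS : Monotone S)
    (hS0 : ∀ u, 0 ≤ S u) (hfS : ∀ u, 0 < u → f u = S u * Real.exp (-u) - 1) (hl : 0 < l)
    {h y : ℝ} (hh : 0 < h) (hy : 2 * h < y) (u : ℝ) :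
    fejerKernel l (y - h - u) + f u * fejerKernel l (y - h - u) ≤
      Real.exp (2 * h) * (S y * Real.exp (-y)) * fejerKernel l (y - h - u) +
        (C + 1) * (4 / l * (1 + 1 / h ^ 2)) * (1 + (y - h - u) ^ 2)⁻¹ := by
  have hC : 0 ≤ C := (abs_nonneg _).trans (hf.abs_le 0)
  have hK := fejerKernel_nonneg hl (y - h - u)
  have hmain : 0 ≤ Real.exp (2 * h) * (S y * Real.exp (-y)) := by
    have := hS0 y
    positivity
  by_cases hu : |y - h - u| ≤ h
  · obtain ⟨hlow, hhigh⟩ := _root_.abs_le.1 hu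
    have hmono : S u * Real.exp (-u) ≤ Real.exp (2 * h) * (S y * Real.exp (-y)) := by
      calc S u * Real.exp (-u) ≤ S y * Real.exp (2 * h - y) := by
            gcongr
            · exact hS0 y
            · exact hS (by linarith)
            · linarith
        _ = _ := by rw [sub_eq_add_neg, Real.exp_add]; ring
    have htail : 0 ≤ (C + 1) * (4 / l * (1 + 1 / h ^ 2)) * (1 + (y - h - u) ^ 2)⁻¹ := by
      positivity
    rw [hfS u (by linarith)]
    linarith [mul_le_mul_of_nonneg_right hmono hK]
  · have hfu : f u ≤ C := (_root_.abs_le.1 (hf.abs_le u)).2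
    have htail := mul_le_mul_of_nonneg_left (fejerKernel_le_of_lt_abs hl hh (not_le.1 hu))
      (show 0 ≤ C + 1 by linarith)
    linarith [mul_le_mul_of_nonneg_right hfu hK, mul_nonneg hmain hK]

lemma integral_fejerKernel_add_le (hf : HasContinuousLaplace f C F) (hS : Monotone S)
    (hS0 : ∀ u, 0 ≤ S u) (hfS : ∀ u, 0 < u → f u = S u * Real.exp (-u) - 1) (hl : 0 < l)
    {h y : ℝ} (hh : 0 < h) (hy : 2 * h < y) :
    (∫ v, fejerKernel 1 v) + ∫ u, f u * fejerKernel l (y - h - u) ≤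
      Real.exp (2 * h) * (S y * Real.exp (-y)) * (∫ v, fejerKernel 1 v)
      + (C + 1) * (4 / l * (1 + 1 / h ^ 2)) * π := by
  have hK := (integrable_fejerKernel hl).comp_sub_left (y - h)
  have hfK := hf.integrable_mul_fejerKernel hl (y - h)
  have htail := (integrable_inv_one_add_sq.comp_sub_left (y - h)).const_mul
    ((C + 1) * (4 / l * (1 + 1 / h ^ 2)))
  have hintK : ∫ u, fejerKernel l (y - h - u) = ∫ v, fejerKernel 1 v := by
    rw [integral_sub_left_eq_self (fun v => fejerKernel l v) volume (y - h),
      integral_fejerKernel hl]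
  have hintπ : ∫ u : ℝ, (1 + (y - h - u) ^ 2)⁻¹ = π := by
    rw [integral_sub_left_eq_self (fun v : ℝ => (1 + v ^ 2)⁻¹) volume (y - h)]
    exact integral_univ_inv_one_add_sq
  rw [← hintK, ← hintπ, ← integral_add hK hfK, ← integral_const_mul, ← integral_const_mul,
    ← integral_add (hK.const_mul _) htail]
  exact integral_mono (hK.add hfK) ((hK.const_mul _).add htail)
    (hf.fejerKernel_add_mul_le hS hS0 hfS hl hh hy)

theorem eventually_one_sub_le (hf : HasContinuousLaplace f C F) (hS : Monotone S)
    (hS0 : ∀ u, 0 ≤ S u) (hfS : ∀ u, 0 < u → f u = S u * Real.exp (-u) - 1) {ε : ℝ}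
    (hε : 0 < ε) : ∀ᶠ y : ℝ in atTop, 1 - ε ≤ S y * Real.exp (-y) := by
  have hC : 0 ≤ C := (abs_nonneg _).trans (hf.abs_le 0)
  set M := ∫ v, fejerKernel 1 v with hM
  have hMpos : 0 < M := integral_fejerKernel_one_pos
  set h := ε / 4 with hh_def
  have hh : 0 < h := by positivity
  set D := (C + 1) * (4 * (1 + 1 / h ^ 2)) * π with hD
  have hDpos : 0 < D := by positivity
  set l := D / (ε / 4 * M) with hl_def
  have hl : 0 < l := by positivity
  have htail : (C + 1) * (4 / l * (1 + 1 / h ^ 2)) * π = ε / 4 * M := by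
    calc _ = D / l := by rw [hD]; ring
      _ = ε / 4 * M := by rw [hl_def]; field_simp
  have hconv : Tendsto (fun y : ℝ => ∫ u, f u * fejerKernel l (y - h - u)) atTop (𝓝 0) :=
    (hf.tendsto_integral_mul_fejerKernel hl).comp
      (tendsto_atTop_add_const_right _ (-h) tendsto_id)
  filter_upwards [hconv.eventually (lt_mem_nhds (show -(ε / 4 * M) < 0 by
    rw [neg_lt_zero]; positivity)), eventually_gt_atTop (2 * h)] with y hsmall hy
  have hkey := hf.integral_fejerKernel_add_le hS hS0 hfS hl hh hy
  rw [← hM, htail] at hkey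
  have hlow : 1 - ε / 2 ≤ Real.exp (2 * h) * (S y * Real.exp (-y)) :=
    le_of_mul_le_mul_right (by linarith) hMpos
  have hexp : 1 - ε / 2 ≤ Real.exp (-(2 * h)) := by
    linarith [Real.add_one_le_exp (-(2 * h))]
  have hexp_le : Real.exp (-(2 * h)) ≤ 1 := by rw [Real.exp_le_one_iff]; linarith
  calc 1 - ε ≤ Real.exp (-(2 * h)) * (1 - ε / 2) := by
        nlinarith [Real.exp_pos (-(2 * h))]
    _ ≤ Real.exp (-(2 * h)) * (Real.exp (2 * h) * (S y * Real.exp (-y))) := by gcongr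
    _ = S y * Real.exp (-y) := by rw [← mul_assoc, ← Real.exp_add]; simp

end HasContinuousLaplace

end Tauberian

section PrimeNumberTheorem

open MeasureTheory Filter Topology Complex ArithmeticFunction

lemma psi_exp_mul_exp_neg_nonneg (u : ℝ) :
    0 ≤ Chebyshev.psi (Real.exp u) * Real.exp (-u) :=
  mul_nonneg (Chebyshev.psi_nonneg _) (Real.exp_pos _).le

lemma psi_exp_mul_exp_neg_le (u : ℝ) :
    Chebyshev.psi (Real.exp u) * Real.exp (-u) ≤ Real.log 4 + 4 := by
  rw [Real.exp_neg, ← div_eq_mul_inv, div_le_iff₀ (Real.exp_pos u)]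
  exact Chebyshev.psi_le_const_mul_self (Real.exp_pos u).le

lemma LSeries_vonMangoldt_eq_mul_integral {s : ℂ} (hs : 1 < s.re) :
    LSeries (fun n => (vonMangoldt n : ℂ)) s =
      s * ∫ t in Set.Ioi (1 : ℝ), (Chebyshev.psi t : ℂ) * (t : ℂ) ^ (-(s + 1)) := by
  have hpsi (t : ℝ) : ∑ k ∈ Finset.Icc 1 ⌊t⌋₊, vonMangoldt k = Chebyshev.psi t := rfl
  have hgrowth : (fun n : ℕ => ∑ k ∈ Finset.Icc 1 n, vonMangoldt k)
      =O[atTop] fun n => (n : ℝ) ^ (1 : ℝ) := by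
    refine Asymptotics.IsBigO.of_bound (Real.log 4 + 4) (Eventually.of_forall fun n => ?_)
    have hn := hpsi n
    rw [Nat.floor_natCast] at hn
    rw [hn, Real.norm_of_nonneg (Chebyshev.psi_nonneg _)]
    simpa using Chebyshev.psi_le_const_mul_self (Nat.cast_nonneg (α := ℝ) n)
  rw [LSeries_eq_mul_integral_of_nonneg (fun n => vonMangoldt n) zero_le_one hs hgrowth
    fun _ => vonMangoldt_nonneg]
  simp_rw [← Complex.ofReal_sum, hpsi]

lemma LSeries_vonMangoldt_eq_mul_laplace {s : ℂ} (hs : 1 < s.re) :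
    LSeries (fun n => (vonMangoldt n : ℂ)) s =
      s * ∫ u in Set.Ioi (0 : ℝ), ((Chebyshev.psi (Real.exp u) * Real.exp (-u) : ℝ) : ℂ)
        * cexp (-(s - 1) * u) := by
  have himage : Set.image Real.exp (Set.Ioi 0) = Set.Ioi 1 := by
    simp
  rw [LSeries_vonMangoldt_eq_mul_integral hs, ← himage,
    integral_image_eq_integral_abs_deriv_smul measurableSet_Ioi
      (fun x _ => (Real.hasDerivAt_exp x).hasDerivWithinAt) Real.exp_injective.injOn]
  congr 1
  refine setIntegral_congr_fun measurableSet_Ioi fun u _ => ?_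
  have hexp : cexp (u * -(s + 1)) * cexp u = cexp (-u) * cexp (-(s - 1) * u) := by
    rw [← Complex.exp_add, ← Complex.exp_add]; ring_nf
  simp only [abs_of_pos (Real.exp_pos u), Complex.real_smul]
  rw [Complex.cpow_def_of_ne_zero (by exact_mod_cast (Real.exp_pos u).ne'),
    ← Complex.ofReal_log (Real.exp_pos u).le, Real.log_exp]
  push_cast
  linear_combination (Chebyshev.psi (Real.exp u) : ℂ) * hexp

/-- The relative error `ψ(eᵘ) e⁻ᵘ - 1` in the prime number theorem, cut off to `u > 0`. -/
noncomputable def psiError (u : ℝ) : ℝ :=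
  if 0 < u then Chebyshev.psi (Real.exp u) * Real.exp (-u) - 1 else 0

/-- The Laplace transform of `psiError`, namely `(-ζ'/ζ(s + 1) - 1 / s - 1) / (s + 1)`, extended
continuously to `Re s ≥ 0`. -/
noncomputable def psiErrorLaplace (s : ℂ) : ℂ :=
  (vonMangoldt.LFunctionResidueClassAux (q := 1) 1 (s + 1) - 1) / (s + 1)

lemma LFunctionResidueClassAux_one_eq {s : ℂ} (hs : 1 < s.re) :
    vonMangoldt.LFunctionResidueClassAux (q := 1) 1 s =
      LSeries (fun n => (vonMangoldt n : ℂ)) s - 1 / (s - 1) := by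
  have hclass : (fun n => ((vonMangoldt.residueClass (1 : ZMod 1) n : ℝ) : ℂ))
      = fun n => (vonMangoldt n : ℂ) := by
    ext n
    simp [vonMangoldt.residueClass, Subsingleton.elim (n : ZMod 1) 1]
  have h := vonMangoldt.eqOn_LFunctionResidueClassAux (q := 1) (a := 1) isUnit_one
    (show s ∈ {s : ℂ | 1 < s.re} from hs)
  simpa only [hclass, Nat.totient_one, Nat.cast_one, inv_one] using h

lemma abs_psiError_le (u : ℝ) : |psiError u| ≤ Real.log 4 + 4 := by
  have hlog : 0 < Real.log 4 := Real.log_pos (by norm_num)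
  unfold psiError
  split_ifs
  · have := psi_exp_mul_exp_neg_le u
    have := psi_exp_mul_exp_neg_nonneg u
    rw [abs_le]; constructor <;> linarith
  · rw [abs_zero]; positivity

lemma measurable_psiError : Measurable psiError := by
  have := Chebyshev.psi_mono.measurable
  exact Measurable.ite measurableSet_Ioi (by fun_prop) measurable_const

lemma integral_psiError_mul_cexp {s : ℂ} (hs : 0 < s.re) :
    ∫ u, (psiError u : ℂ) * cexp (-s * u) = psiErrorLaplace s := by
  have hs0 : s ≠ 0 := by rintro rfl; simp at hs
  have hs1 : 1 < (s + 1).re := by simpa using hs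
  have hs1' : s + 1 ≠ 0 := by intro h; rw [h, zero_re] at hs1; linarith
  have hre : (-s).re < 0 := by simpa using hs
  have hexp : IntegrableOn (fun u : ℝ => cexp (-s * u)) (Set.Ioi 0) :=
    integrableOn_exp_mul_complex_Ioi hre 0
  have hpsi : IntegrableOn (fun u : ℝ => ((Chebyshev.psi (Real.exp u) * Real.exp (-u) : ℝ) : ℂ)
      * cexp (-s * u)) (Set.Ioi 0) := by
    refine hexp.bdd_mul (c := Real.log 4 + 4) ?_ (Eventually.of_forall fun u => ?_)
    · have := Chebyshev.psi_mono.measurable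
      exact (by fun_prop : Measurable _).aestronglyMeasurable
    · rw [Complex.norm_real, Real.norm_of_nonneg (psi_exp_mul_exp_neg_nonneg u)]
      exact psi_exp_mul_exp_neg_le u
  have hsplit : Set.EqOn (fun u : ℝ => (psiError u : ℂ) * cexp (-s * u))
      (fun u : ℝ => ((Chebyshev.psi (Real.exp u) * Real.exp (-u) : ℝ) : ℂ)
        * cexp (-s * u) - cexp (-s * u)) (Set.Ioi 0) := by
    intro u hu
    simp only [psiError, if_pos (Set.mem_Ioi.1 hu)]
    push_cast; ring
  rw [← setIntegral_eq_integral_of_forall_compl_eq_zero (s := Set.Ioi 0) fun u hu => by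
      simp [psiError, show ¬ 0 < u from hu],
    setIntegral_congr_fun measurableSet_Ioi hsplit, integral_sub hpsi hexp,
    integral_exp_mul_complex_Ioi hre, psiErrorLaplace, LFunctionResidueClassAux_one_eq hs1,
    LSeries_vonMangoldt_eq_mul_laplace hs1, add_sub_cancel_right]
  simp only [ofReal_zero, mul_zero, Complex.exp_zero, neg_div_neg_eq]
  field_simp
  ring

lemma hasContinuousLaplace_psiError :
    HasContinuousLaplace psiError (Real.log 4 + 4) psiErrorLaplace where
  measurable := measurable_psiError
  abs_le := abs_psiError_le
  eq_zero u hu := if_neg (not_lt.2 hu)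
  continuousOn := by
    have hshift : Set.MapsTo (fun s : ℂ => s + 1) {s | 0 ≤ s.re} {s | 1 ≤ s.re} :=
      fun s hs => by simpa using hs
    refine (((vonMangoldt.continuousOn_LFunctionResidueClassAux (q := 1) 1).comp (by fun_prop)
      hshift).sub continuousOn_const).div (by fun_prop) fun s hs h => ?_
    have hre : 1 ≤ (s + 1).re := hshift hs
    rw [h, zero_re] at hre
    linarith
  laplace _ hs := integral_psiError_mul_cexp hs

theorem eventually_le_primeCounting {ε : ℝ} (hε : 0 < ε) :
    ∀ᶠ x : ℝ in atTop, (1 - ε) * (x / Real.log x) ≤ (Nat.primeCounting ⌊x⌋₊ : ℝ) := by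
  have hpsi := hasContinuousLaplace_psiError.eventually_one_sub_le
    (S := fun u => Chebyshev.psi (Real.exp u)) (Chebyshev.psi_mono.comp Real.exp_monotone)
    (fun _ => Chebyshev.psi_nonneg _) (fun _ hu => if_pos hu) hε
  filter_upwards [Real.tendsto_log_atTop.eventually hpsi, eventually_gt_atTop 1] with x hx hx1
  have hx0 : 0 < x := by linarith
  rw [Real.exp_neg, Real.exp_log hx0, ← div_eq_mul_inv, le_div_iff₀ hx0] at hx
  rw [← mul_div_assoc, div_le_iff₀ (Real.log_pos hx1)]
  exact hx.trans (Chebyshev.psi_le_primeCounting_mul_log' x)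

end PrimeNumberTheorem

section SelbergSieve

open ArithmeticFunction BoundingSieve
open scoped ArithmeticFunction.Moebius

lemma sum_moebius_divisors (n : ℕ) : ∑ d ∈ n.divisors, (μ d : ℝ) = if n = 1 then 1 else 0 := by
  have h := congrArg (fun f : ArithmeticFunction ℝ => f n) (coe_moebius_mul_coe_zeta (R := ℝ))
  simp only [coe_mul_zeta_apply, one_apply, intCoe_apply] at h
  convert h

lemma sum_moebius_divisors_filter_dvd {l m : ℕ} (hm : Squarefree m) (hlm : l ∣ m) :
    ∑ d ∈ m.divisors with l ∣ d, (μ d : ℝ) = if l = m then (μ l : ℝ) else 0 := by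
  obtain ⟨e, rfl⟩ := hlm
  have hl : 0 < l := Nat.pos_of_ne_zero (left_ne_zero_of_mul hm.ne_zero)
  have hcoprime : l.Coprime e := Nat.coprime_of_squarefree_mul hm
  have himage : {d ∈ (l * e).divisors | l ∣ d} = e.divisors.image (l * ·) := by
    ext d
    simp only [mem_filter, Nat.mem_divisors, mem_image]
    constructor
    · rintro ⟨⟨hd, -⟩, k, rfl⟩
      exact ⟨k, ⟨Nat.dvd_of_mul_dvd_mul_left hl hd, right_ne_zero_of_mul hm.ne_zero⟩, rfl⟩
    · rintro ⟨k, ⟨hk, -⟩, rfl⟩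
      exact ⟨⟨Nat.mul_dvd_mul_left l hk, hm.ne_zero⟩, dvd_mul_right l k⟩
  have hmul : ∀ d ∈ e.divisors, (μ (l * d) : ℝ) = μ l * μ d := fun d hd => by
    rw [isMultiplicative_moebius.map_mul_of_coprime
      (hcoprime.coprime_dvd_right (Nat.dvd_of_mem_divisors hd)), Int.cast_mul]
  rw [himage, sum_image fun _ _ _ _ h => Nat.eq_of_mul_eq_mul_left hl h, sum_congr rfl hmul,
    ← mul_sum, sum_moebius_divisors]
  have hiff : l = l * e ↔ e = 1 := by rw [eq_comm, Nat.mul_eq_left hl.ne']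
  simp [hiff]

/-- The normalising sum `S = ∑ g(l)` over `l ≤ z` dividing `P` in Selberg's sieve; the main term
of the sieve bound is the total mass divided by `S`. -/
noncomputable def selbergSum (s : BoundingSieve) (z : ℕ) : ℝ :=
  ∑ l ∈ s.prodPrimes.divisors with l ≤ z, s.selbergTerms l

/-- Selberg's weights, which minimise the quadratic form `mainSum (lambdaSquared w)` among the
weights `w` supported on `d ≤ z` with `w 1 = 1`. -/
noncomputable def selbergWeight (s : BoundingSieve) (z d : ℕ) : ℝ :=
  (s.nu d)⁻¹ * μ d * (∑ l ∈ s.prodPrimes.divisors with d ∣ l ∧ l ≤ z, s.selbergTerms l)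
    / selbergSum s z

variable {s : BoundingSieve} {z d l : ℕ}

lemma selbergTerms_nonneg_of_mem (hd : d ∈ s.prodPrimes.divisors) : 0 ≤ s.selbergTerms d :=
  (selbergTerms_pos (Nat.dvd_of_mem_divisors hd)).le

lemma selbergSum_pos (hz : 1 ≤ z) : 0 < selbergSum s z :=
  sum_pos (fun _ hl => selbergTerms_pos (Nat.dvd_of_mem_divisors (mem_filter.1 hl).1))
    ⟨1, by simp [hz, s.prodPrimes_ne_zero]⟩

lemma selbergWeight_one (hz : 1 ≤ z) : selbergWeight s z 1 = 1 := by
  have hsum : ∑ l ∈ s.prodPrimes.divisors with 1 ∣ l ∧ l ≤ z, s.selbergTerms l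
      = selbergSum s z := by
    simp [selbergSum]
  rw [selbergWeight, hsum, s.nu_mult.map_one]
  simp [(selbergSum_pos hz).ne']

lemma selbergWeight_eq_zero (hdz : z < d) : selbergWeight s z d = 0 := by
  have hempty : {l ∈ s.prodPrimes.divisors | d ∣ l ∧ l ≤ z} = ∅ :=
    filter_eq_empty_iff.2 fun l hl hdl =>
      absurd (Nat.le_of_dvd (Nat.pos_of_mem_divisors hl) hdl.1) (by lia)
  rw [selbergWeight, hempty]
  simp

lemma sum_selbergTerms_filter_dvd_le (hd : d ∣ s.prodPrimes) :
    ∑ l ∈ s.prodPrimes.divisors with d ∣ l ∧ l ≤ z, s.selbergTerms l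
      ≤ s.selbergTerms d * selbergSum s z := by
  have hfactor : ∀ l ∈ {l ∈ s.prodPrimes.divisors | d ∣ l ∧ l ≤ z},
      s.selbergTerms l = s.selbergTerms d * s.selbergTerms (l / d) := fun l hl => by
    obtain ⟨hlP, hdl, -⟩ := mem_filter.1 hl
    have hmul : d * (l / d) = l := Nat.mul_div_cancel' hdl
    have hsq : Squarefree (d * (l / d)) := by
      rw [hmul]
      exact squarefree_of_mem_divisors_prodPrimes hlP
    rw [← selbergTerms_isMultiplicative.map_mul_of_coprime (Nat.coprime_of_squarefree_mul hsq),
      hmul]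
  have hinj : Set.InjOn (· / d)
      ({l ∈ s.prodPrimes.divisors | d ∣ l ∧ l ≤ z} : Finset ℕ) := fun a ha b hb hab =>
    Nat.div_left_inj (mem_filter.1 ha).2.1 (mem_filter.1 hb).2.1 |>.1 hab
  rw [sum_congr rfl hfactor, ← mul_sum, ← sum_image (f := fun l => s.selbergTerms l) hinj]
  refine mul_le_mul_of_nonneg_left (sum_le_sum_of_subset_of_nonneg ?_ fun l hl _ =>
    selbergTerms_nonneg_of_mem (mem_filter.1 hl).1) (selbergTerms_pos hd).le
  intro k hk
  simp only [mem_image, mem_filter, Nat.mem_divisors] at hk ⊢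
  obtain ⟨l, ⟨⟨hlP, hP⟩, hdl, hlz⟩, rfl⟩ := hk
  exact ⟨⟨(Nat.div_dvd_of_dvd hdl).trans hlP, hP⟩, (Nat.div_le_self _ _).trans hlz⟩

lemma abs_selbergWeight_le (hz : 1 ≤ z) (hd : d ∣ s.prodPrimes) :
    |selbergWeight s z d| ≤ s.selbergTerms d / s.nu d := by
  have hS := selbergSum_pos (s := s) hz
  have hnu := nu_pos_of_dvd_prodPrimes hd
  have hmoebius : |(μ d : ℝ)| ≤ 1 := mod_cast abs_moebius_le_one (n := d)
  have hnonneg : 0 ≤ ∑ l ∈ s.prodPrimes.divisors with d ∣ l ∧ l ≤ z, s.selbergTerms l :=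
    sum_nonneg fun l hl => selbergTerms_nonneg_of_mem (mem_filter.1 hl).1
  rw [selbergWeight, abs_div, abs_mul, abs_mul, abs_of_pos hS, abs_of_pos (inv_pos.2 hnu),
    abs_of_nonneg hnonneg, div_le_iff₀ hS]
  calc (s.nu d)⁻¹ * |(μ d : ℝ)| * _
      ≤ (s.nu d)⁻¹ * 1 * (s.selbergTerms d * selbergSum s z) := by
        gcongr
        exact sum_selbergTerms_filter_dvd_le hd
    _ = s.selbergTerms d / s.nu d * selbergSum s z := by ring

lemma nu_mul_selbergWeight (hd : d ∣ s.prodPrimes) :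
    s.nu d * selbergWeight s z d = ∑ m ∈ s.prodPrimes.divisors with m ≤ z,
      if d ∣ m then μ d * s.selbergTerms m / selbergSum s z else 0 := by
  rw [← sum_filter, filter_filter, selbergWeight, ← sum_div, ← mul_sum, ← mul_div_assoc,
    ← mul_assoc, ← mul_assoc, mul_inv_cancel₀ (nu_ne_zero hd), one_mul]
  simp only [and_comm]

-- Möbius inversion: Selberg's weights diagonalise the quadratic form of the main term.
lemma sum_nu_mul_selbergWeight (hl : l ∣ s.prodPrimes) :
    ∑ d ∈ s.prodPrimes.divisors with l ∣ d, s.nu d * selbergWeight s z d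
      = if l ≤ z then μ l * s.selbergTerms l / selbergSum s z else 0 := by
  have hinner : ∀ m ∈ {m ∈ s.prodPrimes.divisors | m ≤ z},
      (∑ d ∈ s.prodPrimes.divisors with l ∣ d,
        if d ∣ m then μ d * s.selbergTerms m / selbergSum s z else 0)
      = if l = m then μ l * s.selbergTerms m / selbergSum s z else 0 := by
    intro m hm
    have hmP := Nat.dvd_of_mem_divisors (mem_filter.1 hm).1
    have hset : {d ∈ s.prodPrimes.divisors | l ∣ d ∧ d ∣ m} = {d ∈ m.divisors | l ∣ d} := by
      rw [← Nat.divisors_filter_dvd_of_dvd s.prodPrimes_ne_zero hmP, filter_filter]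
      simp only [and_comm]
    rw [← sum_filter, filter_filter, hset, ← sum_div, ← sum_mul]
    by_cases hlm : l ∣ m
    · rw [sum_moebius_divisors_filter_dvd (squarefree_of_dvd_prodPrimes hmP) hlm]
      split_ifs <;> simp
    · have hempty : {d ∈ m.divisors | l ∣ d} = ∅ :=
        filter_eq_empty_iff.2 fun d hd hld => hlm (hld.trans (Nat.dvd_of_mem_divisors hd))
      rw [hempty, if_neg (by rintro rfl; exact hlm dvd_rfl)]
      simp
  rw [sum_congr rfl fun d hd =>
      nu_mul_selbergWeight (Nat.dvd_of_mem_divisors (mem_filter.1 hd).1),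
    sum_comm, sum_congr rfl hinner, sum_ite_eq]
  simp [hl, s.prodPrimes_ne_zero]

lemma mainSum_lambdaSquared_selbergWeight (hz : 1 ≤ z) :
    s.mainSum (lambdaSquared (selbergWeight s z)) = (selbergSum s z)⁻¹ := by
  have hS := selbergSum_pos (s := s) hz
  have hterm : ∀ l ∈ s.prodPrimes.divisors, (s.selbergTerms l)⁻¹ *
      (∑ d ∈ s.prodPrimes.divisors with l ∣ d, s.nu d * selbergWeight s z d) ^ 2
      = if l ≤ z then s.selbergTerms l / selbergSum s z ^ 2 else 0 := by
    intro l hl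
    have hg := selbergTerms_pos (Nat.dvd_of_mem_divisors hl)
    have hmoebius : (μ l : ℝ) ^ 2 = 1 :=
      mod_cast moebius_sq_eq_one_of_squarefree (squarefree_of_mem_divisors_prodPrimes hl)
    rw [sum_nu_mul_selbergWeight (Nat.dvd_of_mem_divisors hl)]
    split_ifs
    · rw [div_pow, mul_pow, hmoebius]
      field_simp
    · simp
  calc s.mainSum (lambdaSquared (selbergWeight s z))
      = ∑ l ∈ s.prodPrimes.divisors, (s.selbergTerms l)⁻¹ *
          (∑ d ∈ s.prodPrimes.divisors with l ∣ d, s.nu d * selbergWeight s z d) ^ 2 := by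
        rw [mainSum_lambdaSquared_eq_sum_mul_sum_sq]
        simp_rw [sum_filter]
    _ = (selbergSum s z)⁻¹ := by
        rw [sum_congr rfl hterm, ← sum_filter, ← sum_div, ← selbergSum]
        field_simp

lemma abs_lambdaSquared_le (w : ℕ → ℝ) (hd : d ∣ s.prodPrimes) :
    |lambdaSquared w d| ≤ ∑ d₁ ∈ s.prodPrimes.divisors, ∑ d₂ ∈ s.prodPrimes.divisors,
      if d = d₁.lcm d₂ then |w d₁| * |w d₂| else 0 := by
  have hsub : d.divisors ⊆ s.prodPrimes.divisors :=
    Nat.divisors_subset_of_dvd s.prodPrimes_ne_zero hd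
  calc |lambdaSquared w d|
      ≤ ∑ d₁ ∈ d.divisors, ∑ d₂ ∈ d.divisors,
          if d = d₁.lcm d₂ then |w d₁| * |w d₂| else 0 := by
        refine (abs_sum_le_sum_abs _ _).trans (sum_le_sum fun d₁ _ =>
          (abs_sum_le_sum_abs _ _).trans (sum_le_sum fun d₂ _ => ?_))
        split_ifs <;> simp [abs_mul]
    _ ≤ ∑ d₁ ∈ s.prodPrimes.divisors, ∑ d₂ ∈ d.divisors,
          if d = d₁.lcm d₂ then |w d₁| * |w d₂| else 0 :=
        sum_le_sum_of_subset_of_nonneg hsub fun _ _ _ => sum_nonneg fun _ _ => by positivity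
    _ ≤ _ := sum_le_sum fun _ _ => sum_le_sum_of_subset_of_nonneg hsub fun _ _ _ => by positivity

lemma errSum_lambdaSquared_le (s : BoundingSieve) (w : ℕ → ℝ) :
    s.errSum (lambdaSquared w) ≤ ∑ d₁ ∈ s.prodPrimes.divisors, ∑ d₂ ∈ s.prodPrimes.divisors,
      |w d₁| * |w d₂| * |s.rem (d₁.lcm d₂)| := by
  calc s.errSum (lambdaSquared w)
      ≤ ∑ d ∈ s.prodPrimes.divisors, (∑ d₁ ∈ s.prodPrimes.divisors, ∑ d₂ ∈ s.prodPrimes.divisors,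
          if d = d₁.lcm d₂ then |w d₁| * |w d₂| else 0) * |s.rem d| :=
        sum_le_sum fun d hd => mul_le_mul_of_nonneg_right
          (abs_lambdaSquared_le w (Nat.dvd_of_mem_divisors hd)) (abs_nonneg _)
    _ = _ := by
        simp only [sum_mul, ite_mul, zero_mul]
        rw [sum_comm]
        refine sum_congr rfl fun d₁ hd₁ => ?_
        rw [sum_comm]
        refine sum_congr rfl fun d₂ hd₂ => ?_
        have hlcm : d₁.lcm d₂ ∈ s.prodPrimes.divisors := Nat.mem_divisors.2
          ⟨Nat.lcm_dvd (Nat.dvd_of_mem_divisors hd₁) (Nat.dvd_of_mem_divisors hd₂),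
            s.prodPrimes_ne_zero⟩
        rw [sum_ite_eq_of_mem' _ _ _ hlcm]

theorem siftedSum_le_totalMass_div_selbergSum (s : BoundingSieve) (hz : 1 ≤ z) :
    s.siftedSum ≤ s.totalMass / selbergSum s z +
      ∑ d₁ ∈ s.prodPrimes.divisors with d₁ ≤ z, ∑ d₂ ∈ s.prodPrimes.divisors with d₂ ≤ z,
        (s.selbergTerms d₁ / s.nu d₁) * (s.selbergTerms d₂ / s.nu d₂) *
          |s.rem (d₁.lcm d₂)| := by
  have hzero : ∀ d, ¬ d ≤ z → |selbergWeight s z d| = 0 := fun d hd => by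
    rw [selbergWeight_eq_zero (not_le.1 hd), abs_zero]
  refine (siftedSum_le_mainSum_errSum_of_upperMoebius _
    (upperMoebius_lambdaSquared (selbergWeight s z) (selbergWeight_one hz))).trans ?_
  rw [mainSum_lambdaSquared_selbergWeight hz, ← div_eq_mul_inv]
  refine add_le_add le_rfl ((errSum_lambdaSquared_le s _).trans ?_)
  rw [sum_filter]
  refine sum_le_sum fun d₁ hd₁ => ?_
  split_ifs with h₁
  · rw [sum_filter]
    refine sum_le_sum fun d₂ hd₂ => ?_
    have hw₁ := abs_selbergWeight_le hz (Nat.dvd_of_mem_divisors hd₁)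
    have hw₂ := abs_selbergWeight_le hz (Nat.dvd_of_mem_divisors hd₂)
    split_ifs with h₂
    · have := (abs_nonneg _).trans hw₁
      gcongr
    · simp [hzero d₂ h₂]
  · simp [hzero d₁ h₁]

end SelbergSieve

section LinearForms

/-- The positive integers up to `N` in the residue class of `b` modulo `W`. -/
noncomputable def residueClassIoc (W b N : ℕ) : Finset ℕ := {n ∈ Ioc 0 N | n ≡ b [MOD W]}

lemma abs_card_residueClassIoc_sub_le (N v : ℕ) {M : ℕ} (hM : 0 < M) :
    |(#(residueClassIoc M v N) : ℝ) - N / M| ≤ 1 := by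
  have hcard := Nat.Ioc_filter_modEq_card 0 N hM v
  set upper := ((N : ℚ) - v) / M
  set lower := (((0 : ℕ) : ℚ) - v) / M
  have hdiff : upper - lower = N / M := by
    simp only [upper, lower]
    push_cast
    ring
  have hle : lower ≤ upper := sub_nonneg.1 (hdiff ▸ by positivity)
  rw [max_eq_left (sub_nonneg.2 (Int.floor_le_floor hle))] at hcard
  have hcast : (#(residueClassIoc M v N) : ℚ) = ⌊upper⌋ - ⌊lower⌋ := mod_cast hcard
  have habs : |(#(residueClassIoc M v N) : ℚ) - N / M| ≤ 1 := by
    rw [abs_le]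
    constructor <;> linarith [Int.floor_le upper, Int.lt_floor_add_one upper,
      Int.floor_le lower, Int.lt_floor_add_one lower]
  have hreal : ((|(#(residueClassIoc M v N) : ℚ) - N / M| : ℚ) : ℝ) ≤ ((1 : ℚ) : ℝ) :=
    mod_cast habs
  push_cast at hreal
  exact hreal

lemma card_divisors_eq_two_pow {d : ℕ} (hd : Squarefree d) : #d.divisors = 2 ^ #d.primeFactors := by
  rw [Nat.card_divisors hd.ne_zero, prod_congr rfl (g := fun _ => 2), prod_const]
  intro p hp
  have hle := hd.natFactorization_le_one p
  have hpos := (Nat.prime_of_mem_primeFactors hp).factorization_pos_of_dvd hd.ne_zero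
    (Nat.dvd_of_mem_primeFactors hp)
  lia

lemma card_divisors_lcm_le {d e : ℕ} (hd : d ≠ 0) (he : e ≠ 0) :
    #(d.lcm e).divisors ≤ #d.divisors * #e.divisors := by
  open scoped Pointwise in
  calc #(d.lcm e).divisors ≤ #(d * e).divisors :=
        card_le_card (Nat.divisors_subset_of_dvd (mul_ne_zero hd he) (Nat.lcm_dvd_mul d e))
    _ = #(d.divisors * e.divisors) := by rw [Nat.divisors_mul]
    _ ≤ #d.divisors * #e.divisors := card_mul_le

-- Since `n` and `a * n + 1` are coprime, the only contributing divisor is `gcd d n`.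
lemma ite_dvd_mul_add_one_eq_sum {a d n : ℕ} (hd : d ≠ 0) :
    (if d ∣ n * (a * n + 1) then (1 : ℝ) else 0) =
      ∑ e ∈ d.divisors, if e ∣ n ∧ d / e ∣ a * n + 1 then 1 else 0 := by
  have hcoprime : n.Coprime (a * n + 1) := by simp
  have hunique : ∀ e ∈ d.divisors, e ∣ n ∧ d / e ∣ a * n + 1 → e = d.gcd n := by
    rintro e he ⟨hen, hquot⟩
    have hquot' : (d / e).Coprime n := (hcoprime.coprime_dvd_right hquot).symm
    conv_rhs => rw [← Nat.div_mul_cancel (Nat.dvd_of_mem_divisors he)]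
    rw [Nat.Coprime.gcd_mul_left_cancel _ hquot', Nat.gcd_eq_left hen]
  by_cases h : d ∣ n * (a * n + 1)
  · have hgcd : 0 < d.gcd n := Nat.gcd_pos_of_pos_left _ (Nat.pos_of_ne_zero hd)
    have hdvd : d / d.gcd n ∣ n / d.gcd n * (a * n + 1) := by
      have := Nat.div_dvd_div (Nat.gcd_dvd_left d n) h
      rwa [Nat.mul_div_right_comm (Nat.gcd_dvd_right d n)] at this
    rw [if_pos h, sum_eq_single (d.gcd n), if_pos]
    · exact ⟨Nat.gcd_dvd_right _ _, (Nat.coprime_div_gcd_div_gcd hgcd).dvd_of_dvd_mul_left hdvd⟩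
    · exact fun e he hne => if_neg fun h' => hne (hunique e he h')
    · exact fun hmem => absurd (Nat.mem_divisors.2 ⟨Nat.gcd_dvd_left _ _, hd⟩) hmem
  · rw [if_neg h, sum_eq_zero]
    intro e he
    refine if_neg fun ⟨hen, hquot⟩ => h ?_
    rw [← Nat.mul_div_cancel' (Nat.dvd_of_mem_divisors he)]
    exact Nat.mul_dvd_mul hen hquot

lemma exists_dvd_mul_add_one_iff_modEq {a e : ℕ} (he : 0 < e) (hea : e.Coprime a) :
    ∃ u, ∀ n, e ∣ a * n + 1 ↔ n ≡ u [MOD e] := by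
  have : NeZero e := ⟨he.ne'⟩
  obtain ⟨c, hc⟩ := ((ZMod.isUnit_iff_coprime a e).2 hea.symm).exists_right_inv
  have hroot : a * (-c).val + 1 ≡ 0 [MOD e] := by
    rw [← ZMod.natCast_eq_natCast_iff]
    push_cast
    rw [ZMod.natCast_zmod_val, mul_neg, hc]
    ring
  refine ⟨(-c).val, fun n => ?_⟩
  rw [← Nat.modEq_zero_iff_dvd]
  exact ⟨fun h => Nat.ModEq.cancel_left_of_coprime hea
      (Nat.ModEq.add_right_cancel' 1 (h.trans hroot.symm)),
    fun h => ((h.mul_left a).add_right 1).trans hroot⟩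

lemma exists_modEq_dvd_dvd_iff_modEq {a W b d e : ℕ} (he : 0 < e) (hde : d.Coprime e)
    (hW : W.Coprime (d * e)) (hea : e.Coprime a) :
    ∃ v, ∀ n, n ≡ b [MOD W] ∧ d ∣ n ∧ e ∣ a * n + 1 ↔ n ≡ v [MOD W * (d * e)] := by
  obtain ⟨u, hu⟩ := exists_dvd_mul_add_one_iff_modEq he hea
  obtain ⟨v₁, hv₁d, hv₁e⟩ := Nat.chineseRemainder hde 0 u
  obtain ⟨v, hvW, hv⟩ := Nat.chineseRemainder hW b v₁
  have hmod : ∀ {m r n : ℕ}, v ≡ r [MOD m] → (n ≡ r [MOD m] ↔ n ≡ v [MOD m]) := fun h =>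
    ⟨fun h' => h'.trans h.symm, fun h' => h'.trans h⟩
  refine ⟨v, fun n => ?_⟩
  rw [← Nat.modEq_and_modEq_iff_modEq_mul hW, ← Nat.modEq_and_modEq_iff_modEq_mul hde, hu,
    ← Nat.modEq_zero_iff_dvd, hmod hvW, hmod ((hv.of_mul_right e).trans hv₁d),
    hmod ((hv.of_mul_left d).trans hv₁e)]

lemma abs_sum_ite_dvd_mul_add_one_sub_le {a W b N d : ℕ} (hW : 0 < W) (hd : Squarefree d)
    (hdW : d.Coprime (a * W)) :
    |(∑ n ∈ residueClassIoc W b N, if d ∣ n * (a * n + 1) then (1 : ℝ) else 0)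
      - (#d.divisors : ℝ) / d * ((N : ℝ) / W)| ≤ #d.divisors := by
  have hmain : (#d.divisors : ℝ) / d * ((N : ℝ) / W)
      = ∑ _e ∈ d.divisors, (N : ℝ) / (W * d : ℕ) := by
    rw [sum_const, nsmul_eq_mul]
    push_cast
    field_simp
  simp_rw [ite_dvd_mul_add_one_eq_sum (a := a) hd.ne_zero]
  rw [sum_comm, hmain, ← sum_sub_distrib]
  refine (abs_sum_le_sum_abs _ _).trans ?_
  rw [card_eq_sum_ones, Nat.cast_sum, Nat.cast_one]
  refine sum_le_sum fun e he => ?_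
  obtain ⟨f, rfl⟩ := Nat.dvd_of_mem_divisors he
  have hf : 0 < f := Nat.pos_of_ne_zero (right_ne_zero_of_mul hd.ne_zero)
  rw [Nat.mul_div_cancel_left _ (Nat.pos_of_mem_divisors he)]
  obtain ⟨v, hv⟩ := exists_modEq_dvd_dvd_iff_modEq (b := b) hf (Nat.coprime_of_squarefree_mul hd)
    (hdW.coprime_dvd_right (dvd_mul_left W a)).symm
    ((hdW.coprime_dvd_left (dvd_mul_left f e)).coprime_dvd_right (dvd_mul_right a W))
  rw [← sum_filter, residueClassIoc, filter_filter, filter_congr fun n _ => hv n, sum_const,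
    nsmul_eq_mul, mul_one]
  exact abs_card_residueClassIoc_sub_le N v
    (Nat.mul_pos hW (Nat.pos_of_ne_zero hd.ne_zero))

end LinearForms

section TwinSieve

open ArithmeticFunction BoundingSieve

/-- The product of the primes up to `z` which do not divide `Q`. -/
noncomputable def coprimePrimorial (Q z : ℕ) : ℕ := ∏ p ∈ range (z + 1) with p.Prime ∧ ¬ p ∣ Q, p

lemma squarefree_coprimePrimorial (Q z : ℕ) : Squarefree (coprimePrimorial Q z) :=
  squarefree_prod_of_pairwise_isCoprime
    (fun _ hp _ hq hpq => Nat.coprime_iff_isRelPrime.1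
      ((Nat.coprime_primes (mem_filter.1 hp).2.1 (mem_filter.1 hq).2.1).2 hpq))
    fun _ hp => (mem_filter.1 hp).2.1.prime.squarefree

lemma prime_dvd_coprimePrimorial {Q z p : ℕ} (hp : p.Prime) :
    p ∣ coprimePrimorial Q z ↔ p ≤ z ∧ ¬ p ∣ Q := by
  rw [coprimePrimorial, hp.prime.dvd_finsetProd_iff]
  constructor
  · rintro ⟨q, hq, hpq⟩
    simp only [mem_filter, mem_range] at hq
    obtain rfl := (Nat.prime_dvd_prime_iff_eq hp hq.2.1).1 hpq
    exact ⟨by lia, hq.2.2⟩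
  · exact fun ⟨hle, hpQ⟩ => ⟨p, mem_filter.2 ⟨mem_range.2 (Nat.lt_succ_of_le hle), hp, hpQ⟩,
      dvd_rfl⟩

lemma coprime_of_dvd_coprimePrimorial {Q z d : ℕ} (hd : d ∣ coprimePrimorial Q z) : d.Coprime Q :=
  Nat.coprime_of_dvd fun _ hp hpd => ((prime_dvd_coprimePrimorial hp).1 (hpd.trans hd)).2

lemma dvd_coprimePrimorial_iff {Q z d : ℕ} (hdz : d ≤ z) :
    d ∣ coprimePrimorial Q z ↔ Squarefree d ∧ d.Coprime Q := by
  refine ⟨fun h => ⟨(squarefree_coprimePrimorial Q z).squarefree_of_dvd h,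
    coprime_of_dvd_coprimePrimorial h⟩, fun ⟨hsq, hco⟩ => ?_⟩
  rw [← Nat.prod_primeFactors_of_squarefree hsq]
  refine prod_dvd_prod_of_subset _ _ _ fun p hp => ?_
  have hprime := Nat.prime_of_mem_primeFactors hp
  have hpd := Nat.dvd_of_mem_primeFactors hp
  have hpz := (Nat.le_of_dvd (Nat.pos_of_ne_zero hsq.ne_zero) hpd).trans hdz
  simp only [mem_filter, mem_range]
  exact ⟨by lia, hprime, fun hpQ => hprime.one_lt.ne' (Nat.eq_one_of_dvd_coprimes hco hpd hpQ)⟩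

lemma three_le_of_prime_of_not_dvd {Q p : ℕ} (hQ : 2 ∣ Q) (hp : p.Prime) (hpQ : ¬ p ∣ Q) :
    3 ≤ p := by
  have hne : p ≠ 2 := by
    rintro rfl
    exact hpQ hQ
  have := hp.two_le
  lia

lemma strictMono_mul_mul_add_one (a : ℕ) : StrictMono fun n : ℕ => n * (a * n + 1) :=
  strictMono_nat_of_lt_succ fun n => by nlinarith [Nat.zero_le (a * n)]

lemma prodPrimeFactors_apply_prime {R : Type*} [CommSemiring R] (f : ℕ → R) {p : ℕ}
    (hp : p.Prime) : prodPrimeFactors f p = f p := by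
  rw [prodPrimeFactors_apply hp.ne_zero, hp.primeFactors, prod_singleton]

/-- The normalising sum of the Selberg sieve for a pair of linear forms with `Q` the product of
the excluded primes; here `2 / (p - 2)` is `ν(p) / (1 - ν(p))` for the density `ν(p) = 2 / p`. -/
noncomputable def twinSelbergSum (Q z : ℕ) : ℝ :=
  ∑ l ∈ Icc 1 z with Squarefree l ∧ l.Coprime Q, ∏ p ∈ l.primeFactors, 2 / ((p : ℝ) - 2)

/-- The sieve problem for the values `n * (a * n + 1)`, where `n ≤ N` runs over a residue class
modulo `W`, by the primes up to `z` not dividing `a * W`. Evenness of `a * W` keeps the density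
`2 / p` below `1`. -/
noncomputable def twinSieve (a W b N z : ℕ) (heven : 2 ∣ a * W) : BoundingSieve where
  support := (residueClassIoc W b N).image fun n => n * (a * n + 1)
  prodPrimes := coprimePrimorial (a * W) z
  prodPrimes_squarefree := squarefree_coprimePrimorial _ _
  weights := fun _ => 1
  weights_nonneg := fun _ => zero_le_one
  totalMass := (N : ℝ) / W
  nu := prodPrimeFactors fun p => 2 / (p : ℝ)
  nu_mult := IsMultiplicative.prodPrimeFactors _
  nu_pos_of_prime := fun p hp _ => by
    have := hp.pos
    rw [prodPrimeFactors_apply_prime _ hp]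
    positivity
  nu_lt_one_of_prime := fun p hp hpP => by
    have hp3 : (3 : ℝ) ≤ p := mod_cast
      three_le_of_prime_of_not_dvd heven hp ((prime_dvd_coprimePrimorial hp).1 hpP).2
    rw [prodPrimeFactors_apply_prime _ hp, div_lt_one (by linarith)]
    linarith

namespace twinSieve

variable {a W b N z d p : ℕ} {heven : 2 ∣ a * W}

lemma nu_prime (hp : p.Prime) : (twinSieve a W b N z heven).nu p = 2 / (p : ℝ) :=
  prodPrimeFactors_apply_prime _ hp

lemma nu_apply (hd : Squarefree d) :
    (twinSieve a W b N z heven).nu d = (#d.divisors : ℝ) / d := by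
  calc (twinSieve a W b N z heven).nu d = ∏ p ∈ d.primeFactors, 2 / (p : ℝ) :=
        prodPrimeFactors_apply hd.ne_zero
    _ = (#d.divisors : ℝ) / d := by
        rw [prod_div_distrib, prod_const, card_divisors_eq_two_pow hd, ← Nat.cast_prod,
          Nat.prod_primeFactors_of_squarefree hd]
        norm_num

lemma three_le_of_mem_primeFactors (hd : d ∣ (twinSieve a W b N z heven).prodPrimes)
    (hp : p ∈ d.primeFactors) : (3 : ℝ) ≤ p := by
  have hprime := Nat.prime_of_mem_primeFactors hp
  exact_mod_cast three_le_of_prime_of_not_dvd heven hprime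
    ((prime_dvd_coprimePrimorial hprime).1 ((Nat.dvd_of_mem_primeFactors hp).trans hd)).2

lemma siftedSum_eq : (twinSieve a W b N z heven).siftedSum =
    #{n ∈ residueClassIoc W b N |
      ∀ p : ℕ, p.Prime → p ≤ z → ¬ p ∣ a * W → ¬ p ∣ n * (a * n + 1)} := by
  have hcoprime : ∀ m : ℕ, (coprimePrimorial (a * W) z).Coprime m ↔
      ∀ p : ℕ, p.Prime → p ≤ z → ¬ p ∣ a * W → ¬ p ∣ m := fun m =>
    ⟨fun h p hp hpz hpQ hpm => hp.one_lt.ne'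
        (Nat.eq_one_of_dvd_coprimes h ((prime_dvd_coprimePrimorial hp).2 ⟨hpz, hpQ⟩) hpm),
      fun h => Nat.coprime_of_dvd fun p hp hpP =>
        h p hp ((prime_dvd_coprimePrimorial hp).1 hpP).1 ((prime_dvd_coprimePrimorial hp).1 hpP).2⟩
  calc (twinSieve a W b N z heven).siftedSum
      = ∑ m ∈ (residueClassIoc W b N).image fun n => n * (a * n + 1),
          if (coprimePrimorial (a * W) z).Coprime m then (1 : ℝ) else 0 :=
        sum_congr rfl fun m _ => by congr
    _ = _ := by
        rw [sum_image (strictMono_mul_mul_add_one a).injective.injOn, ← sum_filter, sum_const,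
          nsmul_eq_mul, mul_one]
        simp only [hcoprime]

lemma multSum_eq : (twinSieve a W b N z heven).multSum d =
    ∑ n ∈ residueClassIoc W b N, if d ∣ n * (a * n + 1) then (1 : ℝ) else 0 := by
  simp only [BoundingSieve.multSum, twinSieve]
  rw [sum_image (strictMono_mul_mul_add_one a).injective.injOn]

lemma abs_rem_le (hW : 0 < W) (hd : d ∣ (twinSieve a W b N z heven).prodPrimes) :
    |(twinSieve a W b N z heven).rem d| ≤ #d.divisors := by
  have hsq := squarefree_of_dvd_prodPrimes hd
  rw [BoundingSieve.rem, multSum_eq, nu_apply hsq]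
  exact abs_sum_ite_dvd_mul_add_one_sub_le hW hsq (coprime_of_dvd_coprimePrimorial hd)

lemma selbergTerms_eq (hd : d ∣ (twinSieve a W b N z heven).prodPrimes) :
    (twinSieve a W b N z heven).selbergTerms d = ∏ p ∈ d.primeFactors, 2 / ((p : ℝ) - 2) := by
  rw [selbergTerms_apply, ← prod_primeFactors_nu hd, ← prod_mul_distrib]
  refine prod_congr rfl fun p hp => ?_
  have hp3 := three_le_of_mem_primeFactors hd hp
  have hp0 : (p : ℝ) ≠ 0 := by linarith
  have hp2 : (p : ℝ) - 2 ≠ 0 := by linarith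
  have hone : 1 - 2 / (p : ℝ) = (p - 2) / p := by field_simp
  rw [nu_prime (Nat.prime_of_mem_primeFactors hp), hone, inv_div]
  field_simp

lemma selbergSum_eq : selbergSum (twinSieve a W b N z heven) z = twinSelbergSum (a * W) z := by
  have hset : {l ∈ (twinSieve a W b N z heven).prodPrimes.divisors | l ≤ z} =
      {l ∈ Icc 1 z | Squarefree l ∧ l.Coprime (a * W)} := by
    ext d
    simp only [mem_filter, Nat.mem_divisors, mem_Icc]
    constructor
    · rintro ⟨⟨hdP, hP⟩, hdz⟩
      exact ⟨⟨Nat.pos_of_dvd_of_pos hdP (Nat.pos_of_ne_zero hP), hdz⟩,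
        (dvd_coprimePrimorial_iff hdz).1 hdP⟩
    · rintro ⟨⟨-, hdz⟩, hd⟩
      exact ⟨⟨(dvd_coprimePrimorial_iff hdz).2 hd, prodPrimes_ne_zero⟩, hdz⟩
  rw [selbergSum, twinSelbergSum, ← hset]
  exact sum_congr rfl fun l hl =>
    selbergTerms_eq (Nat.dvd_of_mem_divisors (mem_filter.1 hl).1)

lemma selbergTerms_div_nu_mul_card_divisors_le {η : ℝ}
    (hpow : ∀ p : ℕ, p.Prime → ¬ p ∣ a * W → 6 ≤ (p : ℝ) ^ η)
    (hd : d ∣ (twinSieve a W b N z heven).prodPrimes) :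
    (twinSieve a W b N z heven).selbergTerms d / (twinSieve a W b N z heven).nu d * #d.divisors
      ≤ (d : ℝ) ^ η := by
  have hsq := squarefree_of_dvd_prodPrimes hd
  have hnu : ∀ p ∈ d.primeFactors, (twinSieve a W b N z heven).nu p ≤ 2 / 3 := fun p hp => by
    rw [nu_prime (Nat.prime_of_mem_primeFactors hp)]
    exact div_le_div_of_nonneg_left zero_le_two three_pos (three_le_of_mem_primeFactors hd hp)
  calc (twinSieve a W b N z heven).selbergTerms d / (twinSieve a W b N z heven).nu d * #d.divisors
      = ∏ p ∈ d.primeFactors, (1 - (twinSieve a W b N z heven).nu p)⁻¹ * 2 := by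
        rw [selbergTerms_apply, mul_div_cancel_left₀ _ (nu_ne_zero hd),
          card_divisors_eq_two_pow hsq, prod_mul_distrib, prod_const]
        norm_num
    _ ≤ ∏ p ∈ d.primeFactors, (p : ℝ) ^ η := by
        refine prod_le_prod (fun p hp => ?_) fun p hp => ?_
        · have : 0 < 1 - (twinSieve a W b N z heven).nu p := by linarith [hnu p hp]
          positivity
        · have hprime := Nat.prime_of_mem_primeFactors hp
          have hinv : (1 - (twinSieve a W b N z heven).nu p)⁻¹ ≤ 3 := by
            rw [inv_le_comm₀ (by linarith [hnu p hp]) three_pos]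
            linarith [hnu p hp]
          have hsix := hpow p hprime ((prime_dvd_coprimePrimorial hprime).1
            ((Nat.dvd_of_mem_primeFactors hp).trans hd)).2
          linarith
    _ = (d : ℝ) ^ η := by
        rw [Real.finsetProd_rpow _ _ fun _ _ => Nat.cast_nonneg _, ← Nat.cast_prod,
          Nat.prod_primeFactors_of_squarefree hsq]

lemma sum_selbergTerms_div_nu_mul_card_divisors_le {η : ℝ} (hη : 0 < η) (hz : 1 ≤ z)
    (hpow : ∀ p : ℕ, p.Prime → ¬ p ∣ a * W → 6 ≤ (p : ℝ) ^ η) :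
    ∑ d ∈ (twinSieve a W b N z heven).prodPrimes.divisors with d ≤ z,
      (twinSieve a W b N z heven).selbergTerms d / (twinSieve a W b N z heven).nu d * #d.divisors
      ≤ (z : ℝ) ^ (1 + η) := by
  have hsub : {d ∈ (twinSieve a W b N z heven).prodPrimes.divisors | d ≤ z} ⊆ Icc 1 z := fun d hd =>
    mem_Icc.2 ⟨Nat.pos_of_mem_divisors (mem_filter.1 hd).1, (mem_filter.1 hd).2⟩
  calc _ ≤ ∑ d ∈ (twinSieve a W b N z heven).prodPrimes.divisors with d ≤ z, (z : ℝ) ^ η := by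
        refine sum_le_sum fun d hd => ?_
        have hdz : (d : ℝ) ≤ z := mod_cast (mem_filter.1 hd).2
        exact (selbergTerms_div_nu_mul_card_divisors_le hpow
          (Nat.dvd_of_mem_divisors (mem_filter.1 hd).1)).trans (by gcongr)
    _ ≤ ∑ _d ∈ Icc 1 z, (z : ℝ) ^ η :=
        sum_le_sum_of_subset_of_nonneg hsub fun _ _ _ => by positivity
    _ = (z : ℝ) ^ (1 + η) := by
        rw [sum_const, Nat.card_Icc, Nat.add_sub_cancel, nsmul_eq_mul,
          Real.rpow_add (mod_cast hz), Real.rpow_one]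

end twinSieve

theorem card_filter_forall_not_dvd_le {a W b N z : ℕ} {η : ℝ} (hW : 0 < W) (heven : 2 ∣ a * W)
    (hz : 1 ≤ z) (hη : 0 < η) (hpow : ∀ p : ℕ, p.Prime → ¬ p ∣ a * W → 6 ≤ (p : ℝ) ^ η) :
    (#{n ∈ residueClassIoc W b N |
        ∀ p : ℕ, p.Prime → p ≤ z → ¬ p ∣ a * W → ¬ p ∣ n * (a * n + 1)} : ℝ)
      ≤ (N : ℝ) / W / twinSelbergSum (a * W) z + ((z : ℝ) ^ (1 + η)) ^ 2 := by
  set s := twinSieve a W b N z heven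
  have hterm : ∀ d ∈ {d ∈ s.prodPrimes.divisors | d ≤ z}, 0 ≤ s.selbergTerms d / s.nu d :=
    fun d hd => div_nonneg (selbergTerms_nonneg_of_mem (mem_filter.1 hd).1)
      (nu_pos_of_dvd_prodPrimes (Nat.dvd_of_mem_divisors (mem_filter.1 hd).1)).le
  rw [← twinSieve.siftedSum_eq (heven := heven)]
  refine (siftedSum_le_totalMass_div_selbergSum s hz).trans
    (add_le_add (by rw [twinSieve.selbergSum_eq]; rfl) ?_)
  refine le_trans ?_ (pow_le_pow_left₀
    (sum_nonneg fun d hd => mul_nonneg (hterm d hd) (Nat.cast_nonneg _))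
    (twinSieve.sum_selbergTerms_div_nu_mul_card_divisors_le (b := b) (N := N) (heven := heven)
      hη hz hpow) 2)
  rw [sq, sum_mul_sum]
  refine sum_le_sum fun d hd => sum_le_sum fun e he => ?_
  obtain ⟨hdP, hP⟩ := Nat.mem_divisors.1 (mem_filter.1 hd).1
  have heP := Nat.dvd_of_mem_divisors (mem_filter.1 he).1
  have hrem : |s.rem (d.lcm e)| ≤ #d.divisors * #e.divisors :=
    (twinSieve.abs_rem_le hW (Nat.lcm_dvd hdP heP)).trans (mod_cast card_divisors_lcm_le
      (ne_zero_of_dvd_ne_zero hP hdP) (ne_zero_of_dvd_ne_zero hP heP))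
  calc _ ≤ s.selbergTerms d / s.nu d * (s.selbergTerms e / s.nu e) *
        (#d.divisors * #e.divisors) :=
        mul_le_mul_of_nonneg_left hrem (mul_nonneg (hterm d hd) (hterm e he))
    _ = _ := by ring

end TwinSieve

section DivisorSum

lemma sum_range_add_one_mul_pow_le {x : ℝ} (hx₀ : 0 ≤ x) (hx₁ : x < 1) (K : ℕ) :
    ∑ j ∈ range K, ((j : ℝ) + 1) * x ^ j ≤ ((1 - x) ^ 2)⁻¹ := by
  have hsum : HasSum (fun j : ℕ => ((j : ℝ) + 1) * x ^ j) ((1 - x) ^ 2)⁻¹ := by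
    simpa using hasSum_choose_mul_geometric_of_norm_lt_one 1
      (show ‖x‖ < 1 by rwa [Real.norm_of_nonneg hx₀])
  exact sum_le_hasSum _ (fun j _ => by positivity) hsum

lemma sum_prod_le_prod_sum {α ι κ : Type*} {A : Finset α} {U : Finset ι} {J : ι → Finset κ}
    {f : ι → κ → ℝ} {v : α → ι → κ} (hf : ∀ i ∈ U, ∀ j, 0 ≤ f i j)
    (hv : ∀ a ∈ A, ∀ i ∈ U, v a i ∈ J i)
    (hinj : ∀ a ∈ A, ∀ b ∈ A, (∀ i ∈ U, v a i = v b i) → a = b) :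
    ∑ a ∈ A, ∏ i ∈ U, f i (v a i) ≤ ∏ i ∈ U, ∑ j ∈ J i, f i j := by
  have hinjOn : Set.InjOn (fun a i (_ : i ∈ U) => v a i) A := fun a ha b hb h =>
    hinj a ha b hb fun i hi => congrFun (congrFun h i) hi
  rw [prod_sum]
  calc ∑ a ∈ A, ∏ i ∈ U, f i (v a i)
      = ∑ w ∈ A.image fun a i (_ : i ∈ U) => v a i, ∏ i ∈ U.attach, f i.1 (w i.1 i.2) := by
        rw [sum_image hinjOn]
        exact sum_congr rfl fun a _ => (prod_attach U fun i => f i (v a i)).symm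
    _ ≤ ∑ w ∈ U.pi J, ∏ i ∈ U.attach, f i.1 (w i.1 i.2) := by
        refine sum_le_sum_of_subset_of_nonneg (image_subset_iff.2 fun a ha => ?_)
          fun w _ _ => prod_nonneg fun i _ => hf i.1 i.2 _
        exact mem_pi.2 (hv a ha)

lemma card_divisors_div_eq_prod {n : ℕ} (hn : n ≠ 0) {U : Finset ℕ} (hU : n.primeFactors ⊆ U) :
    (#n.divisors : ℝ) / n
      = ∏ p ∈ U, ((n.factorization p : ℝ) + 1) * (1 / (p : ℝ)) ^ n.factorization p := by
  have hprod : (n : ℝ) = ∏ p ∈ n.primeFactors, (p : ℝ) ^ n.factorization p := by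
    conv_lhs => rw [← Nat.prod_factorization_pow_eq_self hn]
    simp [Finsupp.prod]
  rw [← prod_subset hU fun p _ hp => ?_]
  · rw [prod_mul_distrib, Nat.card_divisors hn, div_eq_mul_inv, hprod]
    push_cast
    simp only [one_div, inv_pow, prod_inv_distrib]
  · rw [← Nat.support_factorization, Finsupp.notMem_support_iff] at hp
    simp [hp]

/-- The square of `Q / φ(Q)`, as an Euler product over the primes dividing `Q`. -/
noncomputable def sqEulerFactor (Q : ℕ) : ℝ := ∏ p ∈ Q.primeFactors, ((1 - 1 / (p : ℝ)) ^ 2)⁻¹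

lemma sum_Icc_add_one_mul_inv_pow_le {p : ℕ} (hp : 3 ≤ p) (K : ℕ) :
    ∑ j ∈ Icc 1 K, ((j : ℝ) + 1) * (1 / (p : ℝ)) ^ j ≤ 2 / ((p : ℝ) - 2) := by
  have hp3 : (3 : ℝ) ≤ p := mod_cast hp
  have hlt : 1 / (p : ℝ) < 1 := by
    rw [div_lt_one (by linarith)]
    linarith
  have hgeom := sum_range_add_one_mul_pow_le (by positivity) hlt (K + 1)
  rw [range_eq_Ico, sum_eq_sum_Ico_succ_bot (by lia), zero_add, Ico_add_one_right_eq_Icc,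
    pow_zero, Nat.cast_zero] at hgeom
  have hclosed : ((1 - 1 / (p : ℝ)) ^ 2)⁻¹ - 1 ≤ 2 / ((p : ℝ) - 2) := by
    have hpos : 0 < (p : ℝ) - 2 := by linarith
    have hone : 1 - 1 / (p : ℝ) = (p - 1) / p := by field_simp
    rw [hone, div_pow, inv_div, sub_le_iff_le_add, div_le_iff₀ (by nlinarith),
      div_add_one hpos.ne', div_mul_eq_mul_div, le_div_iff₀ hpos]
    nlinarith
  linarith

/-- The product of the primes which divide `n` but not `Q`. -/
noncomputable def coprimeKernel (Q n : ℕ) : ℕ := ∏ p ∈ n.primeFactors with ¬ p ∣ Q, p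

lemma primeFactors_coprimeKernel (Q n : ℕ) :
    (coprimeKernel Q n).primeFactors = {p ∈ n.primeFactors | ¬ p ∣ Q} :=
  Nat.primeFactors_prod fun _ hp => Nat.prime_of_mem_primeFactors (mem_filter.1 hp).1

lemma squarefree_coprimeKernel (Q n : ℕ) : Squarefree (coprimeKernel Q n) := by
  have hprime : ∀ p ∈ {p ∈ n.primeFactors | ¬ p ∣ Q}, p.Prime := fun p hp =>
    Nat.prime_of_mem_primeFactors (mem_filter.1 hp).1
  exact squarefree_prod_of_pairwise_isCoprime
    (fun p hp q hq hpq => Nat.coprime_iff_isRelPrime.1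
      ((Nat.coprime_primes (hprime p hp) (hprime q hq)).2 hpq))
    fun p hp => (hprime p hp).prime.squarefree

lemma coprimeKernel_dvd (Q n : ℕ) : coprimeKernel Q n ∣ n :=
  (prod_dvd_prod_of_subset _ _ _ (filter_subset _ _)).trans (Nat.prod_primeFactors_dvd n)

lemma coprime_coprimeKernel (Q n : ℕ) : (coprimeKernel Q n).Coprime Q :=
  Nat.coprime_of_dvd fun p hp hpk => by
    have : p ∈ (coprimeKernel Q n).primeFactors :=
      Nat.mem_primeFactors.2 ⟨hp, hpk, (squarefree_coprimeKernel Q n).ne_zero⟩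
    rw [primeFactors_coprimeKernel] at this
    exact (mem_filter.1 this).2

lemma coprimeKernel_mem {Q n z : ℕ} (hn : n ∈ Icc 1 z) :
    coprimeKernel Q n ∈ {l ∈ Icc 1 z | Squarefree l ∧ l.Coprime Q} := by
  have hsq := squarefree_coprimeKernel Q n
  obtain ⟨hpos, hnz⟩ := mem_Icc.1 hn
  exact mem_filter.2 ⟨mem_Icc.2 ⟨Nat.pos_of_ne_zero hsq.ne_zero,
    (Nat.le_of_dvd hpos (coprimeKernel_dvd Q n)).trans hnz⟩, hsq, coprime_coprimeKernel Q n⟩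

lemma primeFactors_subset_union_coprimeKernel {Q : ℕ} (hQ : Q ≠ 0) (n : ℕ) :
    n.primeFactors ⊆ Q.primeFactors ∪ (coprimeKernel Q n).primeFactors := fun p hp => by
  rw [primeFactors_coprimeKernel, mem_union, mem_filter]
  by_cases hpQ : p ∣ Q
  · exact Or.inl (Nat.mem_primeFactors.2 ⟨Nat.prime_of_mem_primeFactors hp, hpQ, hQ⟩)
  · exact Or.inr ⟨hp, hpQ⟩

lemma eq_of_forall_mem_factorization_eq {U : Finset ℕ} {m n : ℕ} (hm : m ≠ 0) (hn : n ≠ 0)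
    (hmU : m.primeFactors ⊆ U) (hnU : n.primeFactors ⊆ U)
    (h : ∀ p ∈ U, m.factorization p = n.factorization p) : m = n := by
  have hzero : ∀ k : ℕ, k.primeFactors ⊆ U → ∀ p ∉ U, k.factorization p = 0 :=
    fun k hkU p hp => by
      rw [← Finsupp.notMem_support_iff, Nat.support_factorization]
      exact fun hpk => hp (hkU hpk)
  refine Nat.eq_of_factorization_eq hm hn fun p => ?_
  by_cases hp : p ∈ U
  · exact h p hp
  · rw [hzero m hmU p hp, hzero n hnU p hp]

lemma sum_card_divisors_div_le_of_coprimeKernel_eq {Q l : ℕ} (hQ : Q ≠ 0) (heven : 2 ∣ Q)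
    (hl : l.Coprime Q) (z : ℕ) :
    ∑ n ∈ Icc 1 z with coprimeKernel Q n = l, (#n.divisors : ℝ) / n
      ≤ sqEulerFactor Q * ∏ p ∈ l.primeFactors, 2 / ((p : ℝ) - 2) := by
  set A := {n ∈ Icc 1 z | coprimeKernel Q n = l}
  set U := Q.primeFactors ∪ l.primeFactors
  set f : ℕ → ℕ → ℝ := fun p j => ((j : ℝ) + 1) * (1 / (p : ℝ)) ^ j
  have hnonneg : ∀ p j, 0 ≤ f p j := fun p j => by positivity
  set J : ℕ → Finset ℕ := fun p => if p ∣ Q then range (z + 1) else Icc 1 z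
  have hA : ∀ n ∈ A, n ≠ 0 ∧ n ≤ z ∧ n.primeFactors ⊆ U ∧ l ∣ n := fun n hn => by
    obtain ⟨hnz, rfl⟩ := mem_filter.1 hn
    exact ⟨by have := (mem_Icc.1 hnz).1; lia, (mem_Icc.1 hnz).2,
      primeFactors_subset_union_coprimeKernel hQ n, coprimeKernel_dvd Q n⟩
  have hmem : ∀ n ∈ A, ∀ p ∈ U, n.factorization p ∈ J p := fun n hn p hp => by
    obtain ⟨hn0, hnz, -, hln⟩ := hA n hn
    have hle : n.factorization p ≤ z := (Nat.factorization_lt p hn0).le.trans hnz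
    by_cases hpQ : p ∣ Q
    · simpa only [J, if_pos hpQ, mem_range] using Nat.lt_succ_of_le hle
    · have hpl := (mem_union.1 hp).resolve_left fun h => hpQ (Nat.dvd_of_mem_primeFactors h)
      simpa only [J, if_neg hpQ, mem_Icc] using
        ⟨(Nat.prime_of_mem_primeFactors hpl).factorization_pos_of_dvd hn0
          ((Nat.dvd_of_mem_primeFactors hpl).trans hln), hle⟩
  have hinj : ∀ n ∈ A, ∀ m ∈ A, (∀ p ∈ U, n.factorization p = m.factorization p) → n = m :=
    fun n hn m hm => eq_of_forall_mem_factorization_eq (hA n hn).1 (hA m hm).1 (hA n hn).2.2.1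
      (hA m hm).2.2.1
  calc ∑ n ∈ A, (#n.divisors : ℝ) / n = ∑ n ∈ A, ∏ p ∈ U, f p (n.factorization p) :=
        sum_congr rfl fun n hn => card_divisors_div_eq_prod (hA n hn).1 (hA n hn).2.2.1
    _ ≤ ∏ p ∈ U, ∑ j ∈ J p, f p j := sum_prod_le_prod_sum (fun p _ => hnonneg p) hmem hinj
    _ = (∏ p ∈ Q.primeFactors, ∑ j ∈ J p, f p j) * ∏ p ∈ l.primeFactors, ∑ j ∈ J p, f p j :=
        prod_union hl.symm.disjoint_primeFactors
    _ ≤ sqEulerFactor Q * ∏ p ∈ l.primeFactors, 2 / ((p : ℝ) - 2) := by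
        have hsum : ∀ p, 0 ≤ ∑ j ∈ J p, f p j := fun p => sum_nonneg fun j _ => hnonneg p j
        refine mul_le_mul (prod_le_prod (fun p _ => hsum p) fun p hp => ?_)
          (prod_le_prod (fun p _ => hsum p) fun p hp => ?_) (prod_nonneg fun p _ => hsum p)
          (prod_nonneg fun p _ => by positivity)
        · have hp1 : (1 : ℝ) < p := mod_cast (Nat.prime_of_mem_primeFactors hp).one_lt
          simp only [J, if_pos (Nat.dvd_of_mem_primeFactors hp)]
          exact sum_range_add_one_mul_pow_le (by positivity)
            ((div_lt_one (by linarith)).2 hp1) _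
        · have hprime := Nat.prime_of_mem_primeFactors hp
          have hpQ : ¬ p ∣ Q := fun h => hprime.one_lt.ne'
            (Nat.eq_one_of_dvd_coprimes hl (Nat.dvd_of_mem_primeFactors hp) h)
          simp only [J, if_neg hpQ]
          exact sum_Icc_add_one_mul_inv_pow_le (three_le_of_prime_of_not_dvd heven hprime hpQ) z

lemma sum_card_divisors_div_le {Q : ℕ} (hQ : Q ≠ 0) (heven : 2 ∣ Q) (z : ℕ) :
    ∑ n ∈ Icc 1 z, (#n.divisors : ℝ) / n ≤ sqEulerFactor Q * twinSelbergSum Q z := by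
  rw [← sum_fiberwise_of_maps_to fun n hn => coprimeKernel_mem (Q := Q) hn, twinSelbergSum,
    mul_sum]
  exact sum_le_sum fun l hl =>
    sum_card_divisors_div_le_of_coprimeKernel_eq hQ heven (mem_filter.1 hl).2.2 z

-- The function `n ↦ τ(n) / n` is the Dirichlet convolution of `n ↦ 1 / n` with itself.
lemma sum_card_divisors_div_eq (z : ℕ) :
    ∑ n ∈ Icc 1 z, (#n.divisors : ℝ) / n
      = ∑ d ∈ Icc 1 z, 1 / (d : ℝ) * (harmonic (z / d) : ℝ) := by
  let g : ArithmeticFunction ℝ := ⟨fun n => 1 / (n : ℝ), by simp⟩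
  have hconv : ∀ n, (g * g) n = (#n.divisors : ℝ) / n := fun n => by
    rw [ArithmeticFunction.mul_apply, sum_congr rfl (g := fun _ => 1 / (n : ℝ)) fun x hx => by
        change 1 / (x.1 : ℝ) * (1 / (x.2 : ℝ)) = 1 / (n : ℝ)
        rw [one_div_mul_one_div, ← Nat.cast_mul, (Nat.mem_divisorsAntidiagonal.1 hx).1],
      sum_const, ← Nat.map_div_right_divisors, card_map, nsmul_eq_mul, mul_one_div]
  have hIcc : ∀ n : ℕ, Icc 1 n = Ioc 0 n := fun n => rfl
  simp only [hIcc, ← hconv, ArithmeticFunction.sum_Ioc_mul_eq_sum_sum]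
  refine sum_congr rfl fun d _ => ?_
  rw [harmonic_eq_sum_Icc, hIcc]
  push_cast
  exact congrArg _ (sum_congr rfl fun m _ => one_div _)

lemma half_sub_sq_log_le_inv_mul_harmonic {d z : ℕ} (hd : 1 ≤ d) (hdz : d ≤ z) :
    1 / 2 * (Real.log ((z + 1) / d) ^ 2 - Real.log ((z + 1) / (d + 1 : ℕ)) ^ 2)
      ≤ 1 / (d : ℝ) * (harmonic (z / d) : ℝ) := by
  have hd0 : (0 : ℝ) < d := mod_cast hd
  have hdz' : (d : ℝ) ≤ z := mod_cast hdz
  set u := Real.log ((z + 1) / d)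
  set v := Real.log ((z + 1) / (d + 1 : ℕ))
  have hharmonic : u ≤ harmonic (z / d) := by
    refine (Real.log_le_log (by positivity) ?_).trans (log_add_one_le_harmonic (z / d))
    rw [div_le_iff₀ hd0]
    exact_mod_cast (Nat.lt_mul_of_div_lt (Nat.lt_succ_self _) hd : z < (z / d + 1) * d)
  have hdiff : u - v ≤ 1 / d := by
    have hquot : (((z : ℝ) + 1) / d) / ((z + 1) / (d + 1 : ℕ)) = 1 + 1 / d := by
      push_cast
      field_simp
    rw [← Real.log_div (by positivity) (by positivity), hquot]
    linarith [Real.log_le_sub_one_of_pos (show (0 : ℝ) < 1 + 1 / d by positivity)]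
  have hv : 0 ≤ v := by
    refine Real.log_nonneg ?_
    rw [one_le_div (by positivity)]
    push_cast
    linarith
  have hvu : v ≤ u := by
    refine Real.log_le_log (by positivity) ?_
    gcongr
    exact d.le_succ
  calc 1 / 2 * (u ^ 2 - v ^ 2) = (u - v) * ((u + v) / 2) := by ring
    _ ≤ 1 / d * u := mul_le_mul hdiff (by linarith) (by linarith) (by positivity)
    _ ≤ 1 / d * harmonic (z / d) := by gcongr

lemma half_sq_log_le_sum_card_divisors_div (z : ℕ) :
    1 / 2 * Real.log (z + 1) ^ 2 ≤ ∑ n ∈ Icc 1 z, (#n.divisors : ℝ) / n := by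
  have htelescope : ∑ d ∈ Icc 1 z,
      (Real.log ((z + 1) / d) ^ 2 - Real.log ((z + 1) / (d + 1 : ℕ)) ^ 2)
      = Real.log (z + 1) ^ 2 := by
    rw [← Ico_add_one_right_eq_Icc, ← neg_inj, ← sum_neg_distrib]
    simp only [neg_sub]
    rw [sum_Ico_sub (fun d : ℕ => Real.log ((z + 1) / (d : ℝ)) ^ 2) (by lia)]
    have hone : ((z : ℝ) + 1) / (z + 1 : ℕ) = 1 := by
      push_cast
      exact div_self (by positivity)
    rw [hone]
    simp
  rw [sum_card_divisors_div_eq, ← htelescope, mul_sum]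
  exact sum_le_sum fun d hd =>
    half_sub_sq_log_le_inv_mul_harmonic (mem_Icc.1 hd).1 (mem_Icc.1 hd).2

lemma half_sq_log_le_sqEulerFactor_mul_twinSelbergSum {Q : ℕ} (hQ : Q ≠ 0) (heven : 2 ∣ Q)
    (z : ℕ) : 1 / 2 * Real.log (z + 1) ^ 2 ≤ sqEulerFactor Q * twinSelbergSum Q z :=
  (half_sq_log_le_sum_card_divisors_div z).trans (sum_card_divisors_div_le hQ heven z)

end DivisorSum

section LogWeights

/-- The weight `1 / (a log² (x / a))` with which the sieve bound for the pair `n`, `a * n + 1`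
(`n ≤ x / a`) enters the sum over `a`. -/
noncomputable def logWeight (x : ℝ) (a : ℕ) : ℝ := 1 / ((a : ℝ) * Real.log (x / a) ^ 2)

lemma logWeight_nonneg (x : ℝ) (a : ℕ) : 0 ≤ logWeight x a := by
  unfold logWeight
  positivity

lemma add_sq_div_two_le_neg_log_one_sub {t : ℝ} (ht₀ : 0 ≤ t) (ht₁ : t < 1) :
    t + t ^ 2 / 2 ≤ -Real.log (1 - t) := by
  have hsum := sum_le_hasSum (range 2) (fun n _ => by positivity)
    (Real.hasSum_pow_div_log_of_abs_lt_one (by rwa [abs_of_nonneg ht₀] : |t| < 1))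
  norm_num [sum_range_succ] at hsum
  linarith

-- Compares a weight with the integral of `t ↦ 1 / (t log² (x / t))` over `[a, a + h]`.
lemma logWeight_add_le {x : ℝ} {a h : ℕ} (hx : 0 < x) (hh : 0 < h) (ha : 0 < a)
    (hlog : 3 ≤ Real.log (x / (a + h : ℕ))) :
    logWeight x (a + h) ≤ (1 / Real.log (x / (a + h : ℕ)) - 1 / Real.log (x / a)) / h := by
  have ha' : (0 : ℝ) < a := mod_cast ha
  have hh' : (0 : ℝ) < h := mod_cast hh
  set b : ℝ := ((a + h : ℕ) : ℝ) with hb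
  have hba : b = a + h := by rw [hb, Nat.cast_add]
  have hb₀ : 0 < b := by linarith
  set u := Real.log (x / b) with hu
  set t := (h : ℝ) / b with ht
  have ht₀ : 0 < t := by positivity
  have ht₁ : t < 1 := by
    rw [ht, div_lt_one hb₀]
    linarith
  have hloga : Real.log (x / a) = u + -Real.log (1 - t) := by
    have hquot : 1 - t = a / b := by
      rw [ht, one_sub_div hb₀.ne', hba, add_sub_cancel_right]
    rw [hquot, hu, ← Real.log_inv, ← Real.log_mul (by positivity) (by positivity)]
    congr 1
    field_simp
  have hd := add_sq_div_two_le_neg_log_one_sub ht₀.le ht₁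
  set d := -Real.log (1 - t)
  have hd₀ : 0 < d := by nlinarith
  have hu₀ : 0 < u := by linarith
  have hdiff : 1 / u - 1 / (u + d) = d / (u * (u + d)) := by
    rw [div_sub_div _ _ hu₀.ne' (by positivity), one_mul, mul_one, add_sub_cancel_left]
  have hweight : 1 / (b * u ^ 2) * h = t / u ^ 2 := by
    rw [ht]
    field_simp
  have hkey : t * (u + d) ≤ d * u := by
    have hscaled : (t + t ^ 2 / 2) * (u - t) ≤ d * (u - t) :=
      mul_le_mul_of_nonneg_right hd (by linarith)
    have hrest : 0 ≤ t ^ 2 * (u - 2 - t) := mul_nonneg (by positivity) (by linarith)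
    nlinarith
  rw [hloga, logWeight, ← hb, ← hu, le_div_iff₀ hh', hweight, hdiff,
    div_le_div_iff₀ (by positivity) (by positivity)]
  calc t * (u * (u + d)) = t * (u + d) * u := by ring
    _ ≤ d * u * u := by gcongr
    _ = d * u ^ 2 := by ring

variable {x L : ℝ} {Y W : ℕ}

lemma le_log_div_of_le {a : ℕ} (hx : 0 < x) (hY : L ≤ Real.log (x / Y)) (ha : 0 < a)
    (haY : a ≤ Y) : L ≤ Real.log (x / a) := by
  have hY₀ : 0 < Y := ha.trans_le haY
  exact hY.trans (Real.log_le_log (by positivity) (by gcongr))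

lemma sum_range_logWeight_le {a h J : ℕ} (hx : 0 < x) (hL : 3 ≤ L) (hY : L ≤ Real.log (x / Y))
    (hh : 0 < h) (ha : 0 < a) (hJ : a + J * h ≤ Y) :
    ∑ j ∈ range (J + 1), logWeight x (a + j * h)
      ≤ 1 / (a * L ^ 2) + (1 / L - 1 / Real.log x) / h := by
  have hlog : ∀ {b : ℕ}, 0 < b → b ≤ Y → L ≤ Real.log (x / b) := le_log_div_of_le hx hY
  have hfirst := hlog ha (le_self_add.trans hJ)
  calc ∑ j ∈ range (J + 1), logWeight x (a + j * h)
      = logWeight x a + ∑ j ∈ range J, logWeight x (a + (j + 1) * h) := by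
        rw [sum_range_succ', zero_mul, add_zero, add_comm]
    _ ≤ logWeight x a + ∑ j ∈ range J, (1 / Real.log (x / (a + (j + 1) * h : ℕ))
          - 1 / Real.log (x / (a + j * h : ℕ))) / h := by
        gcongr with j hj
        have hle : a + (j + 1) * h ≤ Y := by
          refine le_trans ?_ hJ
          gcongr
          exact mem_range.1 hj
        have hstep : a + (j + 1) * h = a + j * h + h := by ring
        rw [hstep] at hle ⊢
        exact logWeight_add_le hx hh (by lia) (hL.trans (hlog (by lia) hle))
    _ = logWeight x a
          + (1 / Real.log (x / (a + J * h : ℕ)) - 1 / Real.log (x / a)) / h := by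
        rw [← sum_div, sum_range_sub (fun j => 1 / Real.log (x / (a + j * h : ℕ))), zero_mul,
          add_zero]
    _ ≤ 1 / (a * L ^ 2) + (1 / L - 1 / Real.log x) / h := by
        have hlast := hlog (ha.trans_le le_self_add) hJ
        have hle : Real.log (x / a) ≤ Real.log x :=
          Real.log_le_log (by positivity) (div_le_self hx.le (mod_cast ha))
        have : (0 : ℝ) < a := mod_cast ha
        have : 0 < Real.log (x / a) := by linarith
        have : 0 < L := by linarith
        unfold logWeight
        gcongr

lemma sum_logWeight_modEq_le {D h : ℕ} (hx : 0 < x) (hL : 3 ≤ L) (hY : L ≤ Real.log (x / Y))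
    (hY₀ : 0 < Y) (hh : 0 < h) (hD : 0 < D) (v : ℕ) :
    ∑ a ∈ Icc D Y with a ≡ v [MOD h], logWeight x a
      ≤ 1 / (D * L ^ 2) + (1 / L - 1 / Real.log x) / h := by
  have hL₀ : 0 < L := by linarith
  rcases {a ∈ Icc D Y | a ≡ v [MOD h]}.eq_empty_or_nonempty with hempty | hne
  · have hlogx : L ≤ Real.log x := by simpa using le_log_div_of_le hx hY one_pos hY₀
    have hdiff : 0 ≤ 1 / L - 1 / Real.log x :=
      sub_nonneg.2 (one_div_le_one_div_of_le hL₀ hlogx)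
    rw [hempty, sum_empty]
    positivity
  set a₀ := {a ∈ Icc D Y | a ≡ v [MOD h]}.min' hne
  obtain ⟨hmem, hmod⟩ := mem_filter.1 (min'_mem _ hne : a₀ ∈ {a ∈ Icc D Y | a ≡ v [MOD h]})
  obtain ⟨hDa₀, ha₀Y⟩ := mem_Icc.1 hmem
  have hsub : {a ∈ Icc D Y | a ≡ v [MOD h]} ⊆
      (range ((Y - a₀) / h + 1)).image fun j => a₀ + j * h := fun a ha => by
    have hle : a₀ ≤ a := min'_le _ a ha
    obtain ⟨haY, hav⟩ := mem_filter.1 ha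
    have hdvd : h ∣ a - a₀ := (Nat.modEq_iff_dvd' hle).1 (hmod.trans hav.symm)
    refine mem_image.2 ⟨(a - a₀) / h, mem_range.2 (Nat.lt_succ_of_le ?_), ?_⟩
    · exact Nat.div_le_div_right (Nat.sub_le_sub_right (mem_Icc.1 haY).2 a₀)
    · rw [Nat.div_mul_cancel hdvd, Nat.add_sub_cancel' hle]
  have hinj : Function.Injective fun j => a₀ + j * h := fun i j hij =>
    Nat.eq_of_mul_eq_mul_right hh (Nat.add_left_cancel hij)
  have hlast : a₀ + (Y - a₀) / h * h ≤ Y := by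
    have := Nat.div_mul_le_self (Y - a₀) h
    lia
  calc ∑ a ∈ Icc D Y with a ≡ v [MOD h], logWeight x a
      ≤ ∑ a ∈ (range ((Y - a₀) / h + 1)).image fun j => a₀ + j * h, logWeight x a :=
        sum_le_sum_of_subset_of_nonneg hsub fun a _ _ => logWeight_nonneg x a
    _ = ∑ j ∈ range ((Y - a₀) / h + 1), logWeight x (a₀ + j * h) := sum_image hinj.injOn
    _ ≤ 1 / (a₀ * L ^ 2) + (1 / L - 1 / Real.log x) / h :=
        sum_range_logWeight_le hx hL hY hh (hD.trans_le hDa₀) hlast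
    _ ≤ 1 / (D * L ^ 2) + (1 / L - 1 / Real.log x) / h := by gcongr

lemma sqEulerFactor_mul {a : ℕ} (ha : a ≠ 0) (hW : W ≠ 0) :
    sqEulerFactor (a * W) = sqEulerFactor W * sqEulerFactor (coprimeKernel W a) := by
  have hunion : (a * W).primeFactors = W.primeFactors ∪ (coprimeKernel W a).primeFactors := by
    rw [Nat.primeFactors_mul ha hW, primeFactors_coprimeKernel]
    ext p
    simp only [mem_union, mem_filter, Nat.mem_primeFactors]
    tauto
  rw [sqEulerFactor, hunion,
    prod_union (coprime_coprimeKernel W a).symm.disjoint_primeFactors, sqEulerFactor, sqEulerFactor]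

lemma one_sub_inv_pos {p : ℕ} (hp : 1 < p) : 0 < 1 - 1 / (p : ℝ) := by
  have : (1 : ℝ) < p := mod_cast hp
  rw [sub_pos, div_lt_one (by linarith)]
  exact this

lemma sqEulerFactor_pos (Q : ℕ) : 0 < sqEulerFactor Q := prod_pos fun p hp => by
  have := one_sub_inv_pos (Nat.prime_of_mem_primeFactors hp).one_lt
  positivity

lemma sqEulerFactor_mul_totient_sq (W : ℕ) :
    sqEulerFactor W * (W.totient : ℝ) ^ 2 = (W : ℝ) ^ 2 := by
  have htotient : (W.totient : ℝ) = W * ∏ p ∈ W.primeFactors, (1 - 1 / (p : ℝ)) := by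
    have := congrArg (fun q : ℚ => (q : ℝ)) (Nat.totient_eq_mul_prod_factors W)
    push_cast at this
    simpa only [one_div] using this
  have hne : ∏ p ∈ W.primeFactors, (1 - 1 / (p : ℝ)) ≠ 0 := prod_ne_zero_iff.2 fun p hp =>
    (one_sub_inv_pos (Nat.prime_of_mem_primeFactors hp).one_lt).ne'
  rw [htotient, sqEulerFactor, prod_inv_distrib, prod_pow, mul_pow, mul_comm, mul_assoc,
    mul_inv_cancel₀ (pow_ne_zero 2 hne), mul_one]

lemma inv_one_sub_inv_sq_le {p : ℕ} (hp : 3 ≤ p) :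
    ((1 - 1 / (p : ℝ)) ^ 2)⁻¹ ≤ 1 + 4 / (p : ℝ) := by
  have hp3 : (3 : ℝ) ≤ p := mod_cast hp
  have hp₀ : (p : ℝ) ≠ 0 := by linarith
  rw [one_sub_div hp₀, div_pow, inv_div, one_add_div hp₀, div_le_div_iff₀ (by nlinarith)
    (by linarith)]
  nlinarith [mul_nonneg (Nat.cast_nonneg (α := ℝ) p) (sub_nonneg.2 hp3)]

lemma sqEulerFactor_le_sum_powerset {l a : ℕ} {P : Finset ℕ} (hl : ∀ p ∈ l.primeFactors, 3 ≤ p)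
    (hP : l.primeFactors ⊆ P) (hla : l ∣ a) :
    sqEulerFactor l
      ≤ ∑ s ∈ P.powerset, if (∏ p ∈ s, p) ∣ a then ∏ p ∈ s, 4 / (p : ℝ) else 0 := by
  have hnonneg : ∀ s : Finset ℕ, 0 ≤ ∏ p ∈ s, 4 / (p : ℝ) := fun s =>
    prod_nonneg fun p _ => by positivity
  calc sqEulerFactor l ≤ ∏ p ∈ l.primeFactors, (1 + 4 / (p : ℝ)) :=
        prod_le_prod (fun p _ => by positivity) fun p hp => inv_one_sub_inv_sq_le (hl p hp)
    _ = ∑ s ∈ l.primeFactors.powerset,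
          if (∏ p ∈ s, p) ∣ a then ∏ p ∈ s, 4 / (p : ℝ) else 0 := by
        rw [prod_one_add]
        refine sum_congr rfl fun s hs => (if_pos ?_).symm
        exact ((prod_dvd_prod_of_subset _ _ _ (mem_powerset.1 hs)).trans
          (Nat.prod_primeFactors_dvd l)).trans hla
    _ ≤ _ := by
        refine sum_le_sum_of_subset_of_nonneg (powerset_mono.2 hP) fun s _ _ => ?_
        split_ifs
        exacts [hnonneg s, le_rfl]

lemma prod_one_add_div_sq_le_exp {C : ℝ} {w : ℕ} {P : Finset ℕ} (hC : 0 ≤ C) (hw : w ≠ 0)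
    (hP : P ⊆ Ioc w Y) : ∏ p ∈ P, (1 + C / (p : ℝ) ^ 2) ≤ Real.exp (C / w) := by
  calc ∏ p ∈ P, (1 + C / (p : ℝ) ^ 2) ≤ ∏ p ∈ P, Real.exp (C / (p : ℝ) ^ 2) :=
        prod_le_prod (fun p _ => by positivity) fun p _ => by
          rw [add_comm]
          exact Real.add_one_le_exp _
    _ = Real.exp (∑ p ∈ P, C / (p : ℝ) ^ 2) := (Real.exp_sum _ _).symm
    _ ≤ Real.exp (C / w) := by
        refine Real.exp_le_exp.2 ?_
        calc ∑ p ∈ P, C / (p : ℝ) ^ 2 ≤ ∑ p ∈ Ioc w (max w Y), C / (p : ℝ) ^ 2 :=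
              sum_le_sum_of_subset_of_nonneg
                (hP.trans (Ioc_subset_Ioc_right (le_max_right w Y))) fun p _ _ => by positivity
          _ = C * ∑ p ∈ Ioc w (max w Y), ((p : ℝ) ^ 2)⁻¹ := by
              simp only [mul_sum, div_eq_mul_inv]
          _ ≤ C * (w : ℝ)⁻¹ := by
              gcongr
              exact (sum_Ioc_inv_sq_le_sub hw (le_max_left w Y)).trans
                (sub_le_self _ (by positivity))
          _ = C / w := (div_eq_mul_inv _ _).symm

lemma sum_logWeight_modEq_dvd_le {D : ℕ} (hx : 0 < x) (hL : 3 ≤ L) (hY : L ≤ Real.log (x / Y))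
    (hY₀ : 0 < Y) (hW : 0 < W) (hD : 0 < D) (hcop : W.Coprime D) (r : ℕ) :
    ∑ a ∈ Icc 1 Y with a ≡ r [MOD W], (if D ∣ a then logWeight x a else 0)
      ≤ 1 / (D : ℝ) * (1 / L ^ 2 + (1 / L - 1 / Real.log x) / W) := by
  obtain ⟨v, hvr, hv0⟩ := Nat.chineseRemainder hcop r 0
  have hsub : {a ∈ Icc 1 Y | a ≡ r [MOD W] ∧ D ∣ a} ⊆ {a ∈ Icc D Y | a ≡ v [MOD W * D]} := by
    intro a ha
    obtain ⟨haY, har, hDa⟩ := mem_filter.1 ha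
    refine mem_filter.2 ⟨mem_Icc.2 ⟨Nat.le_of_dvd (mem_Icc.1 haY).1 hDa, (mem_Icc.1 haY).2⟩, ?_⟩
    rw [← Nat.modEq_and_modEq_iff_modEq_mul hcop]
    exact ⟨har.trans hvr.symm, (Nat.modEq_zero_iff_dvd.2 hDa).trans hv0.symm⟩
  rw [← sum_filter, filter_filter]
  calc ∑ a ∈ Icc 1 Y with a ≡ r [MOD W] ∧ D ∣ a, logWeight x a
      ≤ ∑ a ∈ Icc D Y with a ≡ v [MOD W * D], logWeight x a :=
        sum_le_sum_of_subset_of_nonneg hsub fun a _ _ => logWeight_nonneg x a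
    _ ≤ 1 / (D * L ^ 2) + (1 / L - 1 / Real.log x) / (W * D : ℕ) :=
        sum_logWeight_modEq_le hx hL hY hY₀ (Nat.mul_pos hW hD) hD v
    _ = 1 / (D : ℝ) * (1 / L ^ 2 + (1 / L - 1 / Real.log x) / W) := by
        push_cast
        field_simp

lemma sqEulerFactor_coprimeKernel_le_sum_powerset {w a : ℕ} (hw : 2 ≤ w)
    (hpW : ∀ p : ℕ, p.Prime → ¬ p ∣ W → w < p) (ha : 0 < a) (haY : a ≤ Y) :
    sqEulerFactor (coprimeKernel W a)
      ≤ ∑ s ∈ {p ∈ Ioc w Y | p.Prime ∧ ¬ p ∣ W}.powerset,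
          if (∏ p ∈ s, p) ∣ a then ∏ p ∈ s, 4 / (p : ℝ) else 0 := by
  have hsub : (coprimeKernel W a).primeFactors ⊆ {p ∈ Ioc w Y | p.Prime ∧ ¬ p ∣ W} :=
    fun p hp => by
      rw [primeFactors_coprimeKernel, mem_filter] at hp
      have hprime := Nat.prime_of_mem_primeFactors hp.1
      have hle := Nat.le_of_dvd ha (Nat.dvd_of_mem_primeFactors hp.1)
      exact mem_filter.2 ⟨mem_Ioc.2 ⟨hpW p hprime hp.2, hle.trans haY⟩, hprime, hp.2⟩
  exact sqEulerFactor_le_sum_powerset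
    (fun p hp => hw.trans_lt (mem_Ioc.1 (mem_filter.1 (hsub hp)).1).1) hsub (coprimeKernel_dvd W a)

lemma sum_sqEulerFactor_mul_logWeight_modEq_le {w : ℕ} (hx : 0 < x) (hL : 3 ≤ L)
    (hY : L ≤ Real.log (x / Y)) (hY₀ : 0 < Y) (hW : 0 < W) (hw : 2 ≤ w)
    (hpW : ∀ p : ℕ, p.Prime → ¬ p ∣ W → w < p) (r : ℕ) :
    ∑ a ∈ Icc 1 Y with a ≡ r [MOD W], sqEulerFactor (coprimeKernel W a) * logWeight x a
      ≤ Real.exp (4 / w) * (1 / L ^ 2 + (1 / L - 1 / Real.log x) / W) := by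
  set P := {p ∈ Ioc w Y | p.Prime ∧ ¬ p ∣ W}
  set B := 1 / L ^ 2 + (1 / L - 1 / Real.log x) / W
  have hP : ∀ p ∈ P, p.Prime ∧ ¬ p ∣ W := fun p hp => (mem_filter.1 hp).2
  have hnonneg : ∀ s : Finset ℕ, 0 ≤ ∏ p ∈ s, 4 / (p : ℝ) := fun s =>
    prod_nonneg fun p _ => by positivity
  have hB : 0 ≤ B := by
    have hsum := sum_logWeight_modEq_dvd_le hx hL hY hY₀ hW one_pos (Nat.coprime_one_right W) r
    rw [Nat.cast_one, one_div_one, one_mul] at hsum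
    refine (sum_nonneg fun a _ => ?_).trans hsum
    split_ifs
    exacts [logWeight_nonneg x a, le_rfl]
  have hfactor : ∀ a ∈ Icc 1 Y, sqEulerFactor (coprimeKernel W a) ≤
      ∑ s ∈ P.powerset, if (∏ p ∈ s, p) ∣ a then ∏ p ∈ s, 4 / (p : ℝ) else 0 := fun a ha =>
    sqEulerFactor_coprimeKernel_le_sum_powerset hw hpW (mem_Icc.1 ha).1 (mem_Icc.1 ha).2
  calc ∑ a ∈ Icc 1 Y with a ≡ r [MOD W], sqEulerFactor (coprimeKernel W a) * logWeight x a
      ≤ ∑ a ∈ Icc 1 Y with a ≡ r [MOD W], ∑ s ∈ P.powerset,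
          (if (∏ p ∈ s, p) ∣ a then ∏ p ∈ s, 4 / (p : ℝ) else 0) * logWeight x a := by
        refine sum_le_sum fun a ha => ?_
        rw [← sum_mul]
        exact mul_le_mul_of_nonneg_right (hfactor a (mem_filter.1 ha).1) (logWeight_nonneg x a)
    _ = ∑ s ∈ P.powerset, (∏ p ∈ s, 4 / (p : ℝ)) * ∑ a ∈ Icc 1 Y with a ≡ r [MOD W],
          (if (∏ p ∈ s, p) ∣ a then logWeight x a else 0) := by
        rw [sum_comm]
        simp only [mul_sum, ite_mul, mul_ite, zero_mul, mul_zero]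
    _ ≤ ∑ s ∈ P.powerset, (∏ p ∈ s, 4 / (p : ℝ)) * ((1 / (∏ p ∈ s, p : ℕ)) * B) := by
        refine sum_le_sum fun s hs => mul_le_mul_of_nonneg_left ?_ (hnonneg s)
        have hsP : ∀ p ∈ s, p.Prime ∧ ¬ p ∣ W := fun p hp => hP p (mem_powerset.1 hs hp)
        exact sum_logWeight_modEq_dvd_le hx hL hY hY₀ hW (prod_pos fun p hp => (hsP p hp).1.pos)
          (Nat.Coprime.prod_right fun p hp =>
            ((Nat.Prime.coprime_iff_not_dvd (hsP p hp).1).2 (hsP p hp).2).symm) r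
    _ = (∏ p ∈ P, (1 + 4 / (p : ℝ) ^ 2)) * B := by
        rw [prod_one_add, sum_mul]
        refine sum_congr rfl fun s _ => ?_
        rw [prod_div_distrib, prod_div_distrib, prod_pow]
        push_cast
        ring
    _ ≤ Real.exp (4 / w) * B := mul_le_mul_of_nonneg_right
        (prod_one_add_div_sq_le_exp zero_le_four (by lia) (filter_subset _ _)) hB

/-- The residues `b` modulo `W` for which `b` and `a * b + 1` are both coprime to `W`. -/
noncomputable def admissibleResidues (W a : ℕ) : Finset ℕ :=
  {b ∈ range W | b.Coprime W ∧ (a * b + 1).Coprime W}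

lemma admissibleResidues_mod (W a : ℕ) : admissibleResidues W (a % W) = admissibleResidues W a :=
  filter_congr fun b _ => by
    have hmod : a % W * b + 1 ≡ a * b + 1 [MOD W] := ((Nat.mod_modEq a W).mul_right b).add_right 1
    rw [Nat.Coprime, Nat.Coprime, Nat.Coprime, hmod.gcd_eq]

lemma card_admissibleResidues_le (W a : ℕ) : #(admissibleResidues W a) ≤ W :=
  (card_filter_le _ _).trans (card_range W).le

lemma card_filter_coprime_mul_add_one_le {b : ℕ} (hW : 0 < W) (hb : b.Coprime W) :
    #{r ∈ range W | (r * b + 1).Coprime W} ≤ W.totient := by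
  rw [Nat.totient_eq_card_coprime]
  refine card_le_card_of_injOn (fun r => (r * b + 1) % W) (fun r hr => ?_) fun r hr r' hr' h => ?_
  · refine mem_filter.2 ⟨mem_range.2 (Nat.mod_lt _ hW), ?_⟩
    rw [Nat.coprime_comm, Nat.Coprime, (Nat.mod_modEq _ W).gcd_eq]
    exact (mem_filter.1 hr).2
  · have hmod : r * b ≡ r' * b [MOD W] := Nat.ModEq.add_right_cancel' 1 h
    exact (Nat.ModEq.cancel_right_of_coprime hb.symm hmod).eq_of_lt_of_lt
      (mem_range.1 (mem_filter.1 hr).1) (mem_range.1 (mem_filter.1 hr').1)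

lemma sum_card_admissibleResidues_le (hW : 0 < W) :
    ∑ r ∈ range W, #(admissibleResidues W r) ≤ W.totient ^ 2 := by
  calc ∑ r ∈ range W, #(admissibleResidues W r)
      = ∑ b ∈ range W with W.Coprime b, #{r ∈ range W | (r * b + 1).Coprime W} := by
        simp only [admissibleResidues, card_filter, Nat.coprime_comm (m := W), ite_and]
        rw [sum_comm, sum_filter]
        refine sum_congr rfl fun b _ => ?_
        split_ifs <;> simp
    _ ≤ ∑ b ∈ range W with W.Coprime b, W.totient := sum_le_sum fun b hb =>
        card_filter_coprime_mul_add_one_le hW (mem_filter.1 hb).2.symm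
    _ = W.totient ^ 2 := by
        rw [sum_const, smul_eq_mul, sq, Nat.totient_eq_card_coprime]

lemma sum_card_admissibleResidues_mul_le {w : ℕ} (hx : 0 < x) (hL : 3 ≤ L)
    (hY : L ≤ Real.log (x / Y)) (hY₀ : 0 < Y) (hW : 0 < W) (hw : 2 ≤ w)
    (hpW : ∀ p : ℕ, p.Prime → ¬ p ∣ W → w < p) :
    ∑ a ∈ Icc 1 Y, (#(admissibleResidues W a) : ℝ) * (sqEulerFactor (a * W) * logWeight x a)
      ≤ (W : ℝ) ^ 2 *
        (Real.exp (4 / w) * (1 / L ^ 2 + (1 / L - 1 / Real.log x) / W)) := by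
  set E := Real.exp (4 / w) * (1 / L ^ 2 + (1 / L - 1 / Real.log x) / W)
  have hclass : ∀ r, ∑ a ∈ Icc 1 Y with a ≡ r [MOD W],
      sqEulerFactor (coprimeKernel W a) * logWeight x a ≤ E :=
    sum_sqEulerFactor_mul_logWeight_modEq_le hx hL hY hY₀ hW hw hpW
  have hE : 0 ≤ E := (sum_nonneg fun a _ =>
    mul_nonneg (sqEulerFactor_pos _).le (logWeight_nonneg x a)).trans (hclass 0)
  have hfactor := (sqEulerFactor_pos W).le
  rw [← sum_fiberwise_of_maps_to (t := range W) (g := (· % W))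
    fun a _ => mem_range.2 (Nat.mod_lt _ hW)]
  calc _ ≤ ∑ r ∈ range W, sqEulerFactor W * #(admissibleResidues W r) * E := by
        refine sum_le_sum fun r hr => ?_
        have hset : {a ∈ Icc 1 Y | a % W = r} = {a ∈ Icc 1 Y | a ≡ r [MOD W]} :=
          filter_congr fun a _ => by rw [Nat.ModEq, Nat.mod_eq_of_lt (mem_range.1 hr)]
        refine le_trans (le_of_eq ?_) (mul_le_mul_of_nonneg_left (hclass r) (by positivity))
        rw [mul_sum, ← hset]
        refine sum_congr rfl fun a ha => ?_
        obtain ⟨haY, rfl⟩ := mem_filter.1 ha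
        rw [sqEulerFactor_mul (Nat.one_le_iff_ne_zero.1 (mem_Icc.1 haY).1) hW.ne',
          admissibleResidues_mod]
        ring
    _ = sqEulerFactor W * ((∑ r ∈ range W, #(admissibleResidues W r) : ℕ) : ℝ) * E := by
        rw [← sum_mul, ← mul_sum, Nat.cast_sum]
    _ ≤ sqEulerFactor W * ((W.totient ^ 2 : ℕ) : ℝ) * E := by
        gcongr
        exact sum_card_admissibleResidues_le hW
    _ = (W : ℝ) ^ 2 * E := by
        rw [Nat.cast_pow, sqEulerFactor_mul_totient_sq]

end LogWeights

section Covering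

variable {c x η : ℝ} {a b q w M N W z : ℕ}

lemma prime_Pplus_and_dvd {n : ℕ} (hn : 1 < n) : (Pplus n).Prime ∧ Pplus n ∣ n := by
  rw [Pplus, if_neg hn.ne']
  obtain ⟨q, hq, hsup⟩ :=
    Finset.exists_mem_eq_sup n.primeFactors (Nat.nonempty_primeFactors.2 hn) id
  rw [hsup]
  exact ⟨Nat.prime_of_mem_primeFactors hq, Nat.dvd_of_mem_primeFactors hq⟩

/-- The `n ≤ N` in the residue class of `b` modulo `W` for which `n * (a * n + 1)` has no prime
factor up to `z` apart from divisors of `a * W`. -/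
noncomputable def twinSiftedSet (a W b N z : ℕ) : Finset ℕ :=
  {n ∈ residueClassIoc W b N |
    ∀ p : ℕ, p.Prime → p ≤ z → ¬ p ∣ a * W → ¬ p ∣ n * (a * n + 1)}

lemma mem_twinSiftedSet_of_prime (hq : q.Prime) (hp : (a * q + 1).Prime) (ha : 0 < a)
    (hqN : q ≤ N) (hz : z < q) : q ∈ twinSiftedSet a W (q % W) N z := by
  refine mem_filter.2 ⟨mem_filter.2 ⟨mem_Ioc.2 ⟨hq.pos, hqN⟩, (Nat.mod_modEq q W).symm⟩,
    fun r hr hrz _ hd => ?_⟩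
  have hqp : q ≤ a * q := Nat.le_mul_of_pos_left q ha
  rcases (Nat.Prime.dvd_mul hr).1 hd with h | h
  · have := (Nat.prime_dvd_prime_iff_eq hr hq).1 h
    lia
  · have := (Nat.prime_dvd_prime_iff_eq hr hp).1 h
    lia

lemma mod_mem_admissibleResidues (hW : 0 < W) (hq : q.Coprime W) (hp : (a * q + 1).Coprime W) :
    q % W ∈ admissibleResidues W a := by
  refine mem_filter.2 ⟨mem_range.2 (Nat.mod_lt _ hW), ?_, ?_⟩
  · rwa [Nat.Coprime, (Nat.mod_modEq q W).gcd_eq]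
  · rwa [Nat.Coprime, (((Nat.mod_modEq q W).mul_left a).add_right 1).gcd_eq]

lemma exists_eq_mul_prime_add_one {p : ℕ} (hc : c ≤ 1) (hp : p.Prime) (hp₂ : 2 < p)
    (hpx : (p : ℝ) ≤ x) (hpc : (p : ℝ) ^ c ≤ Pplus (p - 1)) :
    ∃ a q : ℕ, q.Prime ∧ p = a * q + 1 ∧ 0 < a ∧ (a : ℝ) ≤ x ^ (1 - c) ∧ (p : ℝ) ^ c ≤ q := by
  obtain ⟨hq, a, ha⟩ := prime_Pplus_and_dvd (n := p - 1) (by lia)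
  set q := Pplus (p - 1)
  have hpq : p = a * q + 1 := by
    rw [mul_comm] at ha
    lia
  have ha₀ : 0 < a := Nat.pos_of_ne_zero fun h => hp.ne_one (by rw [hpq, h, zero_mul])
  have hp₀ : (0 : ℝ) < p := mod_cast hp.pos
  have haq : (a : ℝ) * q ≤ p := mod_cast (by lia : a * q ≤ p)
  refine ⟨a, q, hq, hpq, ha₀, ?_, hpc⟩
  calc (a : ℝ) ≤ (p : ℝ) ^ (1 - c) := by
        rw [Real.rpow_sub hp₀, Real.rpow_one, le_div_iff₀ (Real.rpow_pos_of_pos hp₀ c)]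
        exact (mul_le_mul_of_nonneg_left hpc (Nat.cast_nonneg a)).trans haq
    _ ≤ x ^ (1 - c) := Real.rpow_le_rpow hp₀.le hpx (sub_nonneg.2 hc)

lemma filter_prime_subset_biUnion_twinSiftedSet (ζ : ℕ → ℕ) (hc₀ : 0 ≤ c) (hc₁ : c ≤ 1)
    (hx : 0 ≤ x) (hM : 2 ≤ M) (hW : 0 < W) (hWM : (W : ℝ) < (M : ℝ) ^ c)
    (hζ : ∀ a, 0 < a → (ζ a : ℝ) < (M : ℝ) ^ c) :
    (range (⌊x⌋₊ + 1)).filter (fun p : ℕ => p.Prime ∧ (p : ℝ) ^ c ≤ Pplus (p - 1)) ⊆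
      range (M + 1) ∪ (Icc 1 ⌊x ^ (1 - c)⌋₊).biUnion fun a =>
        (admissibleResidues W a).biUnion fun b =>
          (twinSiftedSet a W b ⌊x / a⌋₊ (ζ a)).image fun n => a * n + 1 := by
  intro p hp
  obtain ⟨hpx, hprime, hpc⟩ := mem_filter.1 hp
  rw [mem_union, mem_range]
  refine or_iff_not_imp_left.2 fun hpM => ?_
  have hpx : (p : ℝ) ≤ x := (Nat.le_floor_iff hx).1 (Nat.lt_succ_iff.1 (mem_range.1 hpx))
  obtain ⟨a, q, hq, rfl, ha, hax, hpq⟩ :=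
    exists_eq_mul_prime_add_one hc₁ hprime (by lia) hpx hpc
  have ha₀ : (0 : ℝ) < a := mod_cast ha
  have hMq : (M : ℝ) ^ c ≤ q :=
    (Real.rpow_le_rpow M.cast_nonneg (mod_cast (by lia : M ≤ a * q + 1)) hc₀).trans hpq
  have hWq : W < q := mod_cast hWM.trans_le hMq
  have hcop : ∀ r : ℕ, r.Prime → q ≤ r → r.Coprime W := fun r hr hqr =>
    Nat.coprime_of_lt_prime hW.ne' (hWq.trans_le hqr) hr
  have hqN : q ≤ ⌊x / a⌋₊ := Nat.le_floor <| by
    rw [le_div_iff₀' ha₀]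
    push_cast at hpx
    linarith
  refine mem_biUnion.2 ⟨a, mem_Icc.2 ⟨ha, Nat.le_floor hax⟩, mem_biUnion.2 ⟨q % W, ?_,
    mem_image.2 ⟨q, mem_twinSiftedSet_of_prime hq hprime ha hqN ?_, rfl⟩⟩⟩
  · exact mod_mem_admissibleResidues hW (hcop q hq le_rfl)
      (hcop _ hprime ((Nat.le_mul_of_pos_left q ha).trans (Nat.le_succ _)))
  · exact mod_cast (hζ a ha).trans_le hMq

lemma T_le_add_sum_card_twinSiftedSet (ζ : ℕ → ℕ) (hc₀ : 0 ≤ c) (hc₁ : c ≤ 1) (hx : 0 ≤ x)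
    (hM : 2 ≤ M) (hW : 0 < W) (hWM : (W : ℝ) < (M : ℝ) ^ c)
    (hζ : ∀ a, 0 < a → (ζ a : ℝ) < (M : ℝ) ^ c) :
    T c x ≤ M + 1 + ∑ a ∈ Icc 1 ⌊x ^ (1 - c)⌋₊, ∑ b ∈ admissibleResidues W a,
      #(twinSiftedSet a W b ⌊x / a⌋₊ (ζ a)) :=
  calc T c x ≤ _ := card_le_card
        (filter_prime_subset_biUnion_twinSiftedSet ζ hc₀ hc₁ hx hM hW hWM hζ)
    _ ≤ _ := card_union_le _ _
    _ ≤ _ := add_le_add (card_range _).le <| card_biUnion_le.trans <| sum_le_sum fun _ _ =>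
        card_biUnion_le.trans <| sum_le_sum fun _ _ => card_image_le

lemma half_sq_log_div_sqEulerFactor_le_twinSelbergSum {Q : ℕ} {u : ℝ} (hQ : Q ≠ 0)
    (heven : 2 ∣ Q) (hu : 0 ≤ Real.log u) (huz : Real.log u ≤ Real.log ((z : ℝ) + 1)) :
    1 / 2 * Real.log u ^ 2 / sqEulerFactor Q ≤ twinSelbergSum Q z := by
  rw [div_le_iff₀' (sqEulerFactor_pos Q)]
  calc 1 / 2 * Real.log u ^ 2 ≤ 1 / 2 * Real.log ((z : ℝ) + 1) ^ 2 := by gcongr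
    _ ≤ _ := half_sq_log_le_sqEulerFactor_mul_twinSelbergSum hQ heven z

lemma card_twinSiftedSet_le (ha : 0 < a) (hW : 0 < W) (heven : 2 ∣ W) (hη₀ : 0 < η)
    (hη₁ : η < 1 / 2) (hpow : ∀ p : ℕ, p.Prime → ¬ p ∣ W → 6 ≤ (p : ℝ) ^ η) (hxa : 1 < x / a) :
    (#(twinSiftedSet a W b ⌊x / a⌋₊ ⌊(x / a) ^ (1 / 2 - η)⌋₊) : ℝ) ≤
      2 * x / (W * (1 / 2 - η) ^ 2) * (sqEulerFactor (a * W) * logWeight x a)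
        + (x / a) ^ (1 - η) := by
  have : (0 : ℝ) < a := mod_cast ha
  have hxu : x = x / a * a := by field_simp
  rw [logWeight]
  set u := x / a
  have hu₀ : 0 < u := by linarith
  have hκ : 0 < 1 / 2 - η := by linarith
  have hone : 1 ≤ u ^ (1 / 2 - η) := Real.one_le_rpow hxa.le hκ.le
  set z := ⌊u ^ (1 / 2 - η)⌋₊
  have hz : (z : ℝ) ≤ u ^ (1 / 2 - η) := Nat.floor_le (by positivity)
  have hS := half_sq_log_div_sqEulerFactor_le_twinSelbergSum (z := z) (u := u ^ (1 / 2 - η))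
    (mul_pos ha hW).ne' (heven.mul_left a) (Real.log_nonneg hone)
    (Real.log_le_log (by positivity) (Nat.lt_floor_add_one _).le)
  rw [Real.log_rpow hu₀] at hS
  have hlogu : 0 < Real.log u := Real.log_pos hxa
  have hR := sqEulerFactor_pos (a * W)
  refine (card_filter_forall_not_dvd_le hW (heven.mul_left a) (Nat.le_floor (by simpa using hone))
    hη₀ fun p hp hd => hpow p hp fun h => hd (h.mul_left a)).trans (add_le_add ?_ ?_)
  · calc (⌊u⌋₊ : ℝ) / W / twinSelbergSum (a * W) z
        ≤ u / W / (1 / 2 * ((1 / 2 - η) * Real.log u) ^ 2 / sqEulerFactor (a * W)) := by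
          gcongr
          exact Nat.floor_le hu₀.le
      _ = _ := by
          rw [hxu]
          field_simp
  · calc ((z : ℝ) ^ (1 + η)) ^ 2 ≤ ((u ^ (1 / 2 - η)) ^ (1 + η)) ^ 2 := by gcongr
      _ = u ^ ((1 / 2 - η) * (1 + η) * 2) := by
          rw [Real.rpow_mul hu₀.le, Real.rpow_mul hu₀.le, Real.rpow_two]
      _ ≤ u ^ (1 - η) := Real.rpow_le_rpow_of_exponent_le hxa.le (by nlinarith)

lemma sum_one_div_le_one_add_log (Y : ℕ) :
    ∑ a ∈ Icc 1 Y, 1 / (a : ℝ) ≤ 1 + Real.log Y := by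
  have hharmonic := harmonic_le_one_add_log Y
  rw [harmonic_eq_sum_Icc] at hharmonic
  push_cast at hharmonic
  simpa only [one_div] using hharmonic

lemma sum_card_admissibleResidues_div_le (W Y : ℕ) :
    ∑ a ∈ Icc 1 Y, (#(admissibleResidues W a) : ℝ) * (1 / a) ≤ W * (1 + Real.log Y) :=
  calc ∑ a ∈ Icc 1 Y, (#(admissibleResidues W a) : ℝ) * (1 / a)
      ≤ ∑ a ∈ Icc 1 Y, (W : ℝ) * (1 / a) := by
        gcongr
        exact card_admissibleResidues_le W _
    _ = W * ∑ a ∈ Icc 1 Y, 1 / (a : ℝ) := by rw [mul_sum]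
    _ ≤ W * (1 + Real.log Y) := by
        gcongr
        exact sum_one_div_le_one_add_log Y

lemma rpow_le_div_of_le_floor (hx : 0 < x) (ha : 0 < a) (haY : a ≤ ⌊x ^ (1 - c)⌋₊) :
    x ^ c ≤ x / a := by
  rw [le_div_iff₀ (mod_cast ha)]
  calc x ^ c * a ≤ x ^ c * x ^ (1 - c) := by
        gcongr
        exact (Nat.le_floor_iff (by positivity)).1 haY
    _ = x := by rw [← Real.rpow_add hx, add_sub_cancel, Real.rpow_one]

lemma div_rpow_one_sub_le (hx : 0 < x) (ha : 0 < a) (hη : 0 ≤ η) (hxa : x ^ c ≤ x / a) :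
    (x / a) ^ (1 - η) ≤ x * x ^ (-(c * η)) * (1 / a) := by
  have : (0 : ℝ) < a := mod_cast ha
  calc (x / a) ^ (1 - η) = x / a * (x / a) ^ (-η) := by
        rw [sub_eq_add_neg, Real.rpow_add (by positivity), Real.rpow_one]
    _ ≤ x / a * (x ^ c) ^ (-η) := mul_le_mul_of_nonneg_left
        (Real.rpow_le_rpow_of_nonpos (by positivity) hxa (by linarith)) (by positivity)
    _ = x * x ^ (-(c * η)) * (1 / a) := by
        rw [← Real.rpow_mul hx.le, mul_neg]
        ring

lemma sum_card_twinSiftedSet_le (hx : 1 < x) (hc₀ : 0 < c) (hc₁ : c ≤ 1)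
    (hcx : 3 ≤ c * Real.log x) (hW : 0 < W) (heven : 2 ∣ W) (hw : 2 ≤ w) (hη₀ : 0 < η)
    (hη₁ : η < 1 / 2) (hpW : ∀ p : ℕ, p.Prime → ¬ p ∣ W → w < p)
    (hpow : ∀ p : ℕ, p.Prime → ¬ p ∣ W → 6 ≤ (p : ℝ) ^ η) :
    ∑ a ∈ Icc 1 ⌊x ^ (1 - c)⌋₊, ∑ b ∈ admissibleResidues W a,
        (#(twinSiftedSet a W b ⌊x / a⌋₊ ⌊(x / a) ^ (1 / 2 - η)⌋₊) : ℝ)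
      ≤ 2 * x / (W * (1 / 2 - η) ^ 2) * ((W : ℝ) ^ 2 * (Real.exp (4 / w) *
            (1 / (c * Real.log x) ^ 2 + (1 / (c * Real.log x) - 1 / Real.log x) / W)))
        + x * x ^ (-(c * η)) * (W * (1 + Real.log x)) := by
  have hx₀ : 0 < x := by linarith
  set Y := ⌊x ^ (1 - c)⌋₊
  have hY₀ : 0 < Y := Nat.floor_pos.2 (Real.one_le_rpow hx.le (sub_nonneg.2 hc₁))
  have hxY : x ^ c ≤ x / Y := rpow_le_div_of_le_floor hx₀ hY₀ le_rfl
  have hlogY : c * Real.log x ≤ Real.log (x / Y) := by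
    rw [← Real.log_rpow hx₀]
    exact Real.log_le_log (by positivity) hxY
  have hYx : (Y : ℝ) ≤ x := (Nat.floor_le (by positivity)).trans
    (Real.rpow_le_self_of_one_le hx.le (by linarith))
  calc ∑ a ∈ Icc 1 Y, ∑ b ∈ admissibleResidues W a,
        (#(twinSiftedSet a W b ⌊x / a⌋₊ ⌊(x / a) ^ (1 / 2 - η)⌋₊) : ℝ)
      ≤ ∑ a ∈ Icc 1 Y, ∑ b ∈ admissibleResidues W a,
          (2 * x / (W * (1 / 2 - η) ^ 2) * (sqEulerFactor (a * W) * logWeight x a)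
            + x * x ^ (-(c * η)) * (1 / a)) := by
        refine sum_le_sum fun a ha => sum_le_sum fun b _ => ?_
        obtain ⟨ha₀, haY⟩ := mem_Icc.1 ha
        have hxa : x ^ c ≤ x / a := rpow_le_div_of_le_floor hx₀ ha₀ haY
        exact (card_twinSiftedSet_le ha₀ hW heven hη₀ hη₁ hpow
          ((Real.one_lt_rpow hx hc₀).trans_le hxa)).trans
          (add_le_add le_rfl (div_rpow_one_sub_le hx₀ ha₀ hη₀.le hxa))
    _ = 2 * x / (W * (1 / 2 - η) ^ 2) *
            ∑ a ∈ Icc 1 Y, (#(admissibleResidues W a) : ℝ) *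
              (sqEulerFactor (a * W) * logWeight x a)
          + x * x ^ (-(c * η)) *
            ∑ a ∈ Icc 1 Y, (#(admissibleResidues W a) : ℝ) * (1 / a) := by
        rw [mul_sum, mul_sum, ← sum_add_distrib]
        refine sum_congr rfl fun a _ => ?_
        rw [sum_const, nsmul_eq_mul]
        ring
    _ ≤ _ := by
        gcongr
        · exact sum_card_admissibleResidues_mul_le hx₀ hcx hlogY hY₀ hW hw hpW
        · refine (sum_card_admissibleResidues_div_le W Y).trans ?_
          gcongr

theorem T_le (hx : 1 < x) (hc₀ : 0 < c) (hc₁ : c ≤ 1)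
    (hcx : 3 ≤ c * Real.log x) (hW : 0 < W) (hw : 2 ≤ w) (hη₀ : 0 < η) (hη₁ : η < 1 / 2)
    (hpW : ∀ p : ℕ, p.Prime → ¬ p ∣ W → w < p)
    (hpow : ∀ p : ℕ, p.Prime → ¬ p ∣ W → 6 ≤ (p : ℝ) ^ η)
    (hM : 2 ≤ M) (hxM : x ^ (1 / 2 : ℝ) < (M : ℝ) ^ c) (hWM : (W : ℝ) < (M : ℝ) ^ c) :
    (T c x : ℝ) ≤ M + 1 + (2 * x / (W * (1 / 2 - η) ^ 2) * ((W : ℝ) ^ 2 * (Real.exp (4 / w) *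
          (1 / (c * Real.log x) ^ 2 + (1 / (c * Real.log x) - 1 / Real.log x) / W)))
        + x * x ^ (-(c * η)) * (W * (1 + Real.log x))) := by
  have heven : 2 ∣ W := by
    by_contra h
    have := hpW 2 Nat.prime_two h
    lia
  have hx₀ : 0 ≤ x := by linarith
  have hz : ∀ a : ℕ, 0 < a → (⌊(x / a) ^ (1 / 2 - η)⌋₊ : ℝ) < (M : ℝ) ^ c := fun a ha => by
    calc (⌊(x / a) ^ (1 / 2 - η)⌋₊ : ℝ) ≤ (x / a) ^ (1 / 2 - η) := Nat.floor_le (by positivity)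
      _ ≤ x ^ (1 / 2 - η) := Real.rpow_le_rpow (by positivity)
          (div_le_self hx₀ (mod_cast ha)) (by linarith)
      _ ≤ x ^ (1 / 2 : ℝ) := Real.rpow_le_rpow_of_exponent_le hx.le (by linarith)
      _ < (M : ℝ) ^ c := hxM
  have hcover := T_le_add_sum_card_twinSiftedSet _ hc₀.le hc₁ hx₀ hM hW hWM hz
  calc (T c x : ℝ) ≤ M + 1 + ∑ a ∈ Icc 1 ⌊x ^ (1 - c)⌋₊, ∑ b ∈ admissibleResidues W a,
        (#(twinSiftedSet a W b ⌊x / a⌋₊ ⌊(x / a) ^ (1 / 2 - η)⌋₊) : ℝ) := mod_cast hcover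
    _ ≤ _ := by
        gcongr
        exact sum_card_twinSiftedSet_le hx hc₀ hc₁ hcx hW heven hw hη₀ hη₁ hpW hpow

end Covering

section Asymptotics

open Filter Topology

variable {c B : ℝ}

lemma exists_mul_exp_mul_lt {k : ℝ} (hk : 8 * k < B) :
    ∃ η : ℝ, 0 < η ∧ η < 1 / 2 ∧ 2 / (1 / 2 - η) ^ 2 * Real.exp η * k < B := by
  have hcont : ContinuousAt (fun η : ℝ => 2 / (1 / 2 - η) ^ 2 * Real.exp η * k) 0 := by
    fun_prop (disch := norm_num)
  have hlt : ∀ᶠ η in 𝓝[>] (0 : ℝ), 2 / (1 / 2 - η) ^ 2 * Real.exp η * k < B := by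
    refine nhdsWithin_le_nhds (hcont.eventually_lt_const ?_)
    calc 2 / (1 / 2 - 0) ^ 2 * Real.exp 0 * k = 8 * k := by norm_num [Real.exp_zero]
      _ < B := hk
  have hhalf : ∀ᶠ η : ℝ in 𝓝[>] 0, η < 1 / 2 := nhdsWithin_le_nhds (gt_mem_nhds one_half_pos)
  obtain ⟨η, ⟨hB, hη⟩, hpos⟩ := ((hlt.and hhalf).and self_mem_nhdsWithin).exists
  exact ⟨η, hpos, hη, hB⟩

lemma exists_sieve_modulus {η : ℝ} (hη : 0 < η) : ∃ w W : ℕ, 2 ≤ w ∧ 4 / (w : ℝ) ≤ η ∧ 0 < W ∧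
    (∀ p : ℕ, p.Prime → ¬ p ∣ W → w < p) ∧ ∀ p : ℕ, p.Prime → ¬ p ∣ W → 6 ≤ (p : ℝ) ^ η := by
  have hpow : Tendsto (fun w : ℕ => (w : ℝ) ^ η) atTop atTop :=
    (tendsto_rpow_atTop hη).comp tendsto_natCast_atTop_atTop
  have hdiv : Tendsto (fun w : ℕ => 4 / (w : ℝ)) atTop (𝓝 0) :=
    tendsto_const_div_atTop_nhds_zero_nat 4
  obtain ⟨w, ⟨hw₆, hw₄⟩, hw₂⟩ := ((hpow.eventually_ge_atTop 6).and
    (hdiv.eventually_le_const hη)).and (eventually_ge_atTop 2) |>.exists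
  have hlt : ∀ p : ℕ, p.Prime → ¬ p ∣ w.factorial → w < p := fun p hp hd =>
    not_le.1 fun hpw => hd (hp.dvd_factorial.2 hpw)
  exact ⟨w, w.factorial, hw₂, hw₄, w.factorial_pos, hlt, fun p hp hd =>
    hw₆.trans (Real.rpow_le_rpow w.cast_nonneg (mod_cast (hlt p hp hd).le) hη.le)⟩

lemma tendsto_rpow_neg_mul_log {s : ℝ} (hs : 0 < s) :
    Tendsto (fun x : ℝ => x ^ (-s) * Real.log x) atTop (𝓝 0) := by
  refine (isLittleO_log_rpow_atTop hs).tendsto_div_nhds_zero.congr' ?_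
  filter_upwards [eventually_gt_atTop 0] with x hx
  rw [Real.rpow_neg hx.le, div_eq_inv_mul]

lemma tendsto_ceil_rpow_add_one_mul_log_div {s : ℝ} (hs : s < 1) :
    Tendsto (fun x : ℝ => ((⌈x ^ s⌉₊ : ℝ) + 1) * (Real.log x / x)) atTop (𝓝 0) := by
  have hlim : Tendsto (fun x : ℝ => x ^ (-(1 - s)) * Real.log x + 2 * (x ^ (-1 : ℝ) * Real.log x))
      atTop (𝓝 0) := by
    simpa using (tendsto_rpow_neg_mul_log (sub_pos.2 hs)).add
      ((tendsto_rpow_neg_mul_log one_pos).const_mul 2)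
  refine tendsto_of_tendsto_of_tendsto_of_le_of_le' tendsto_const_nhds hlim ?_ ?_
  · filter_upwards [eventually_ge_atTop 1] with x hx
    have := Real.log_nonneg hx
    positivity
  · filter_upwards [eventually_ge_atTop 1] with x hx
    have hx₀ : 0 < x := by linarith
    have hceil : (⌈x ^ s⌉₊ : ℝ) ≤ x ^ s + 1 := (Nat.ceil_lt_add_one (by positivity)).le
    calc ((⌈x ^ s⌉₊ : ℝ) + 1) * (Real.log x / x) ≤ (x ^ s + 1 + 1) * (Real.log x / x) := by
          have := Real.log_nonneg hx
          gcongr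
      _ = x ^ (-(1 - s)) * Real.log x + 2 * (x ^ (-1 : ℝ) * Real.log x) := by
          rw [neg_sub, Real.rpow_sub hx₀, Real.rpow_one, Real.rpow_neg_one]
          ring

lemma tendsto_sieve_main_term {W κ E : ℝ} (hc : c ≠ 0) (hW : W ≠ 0) :
    Tendsto (fun x : ℝ => 2 * x / (W * κ ^ 2) * (W ^ 2 * (E *
        (1 / (c * Real.log x) ^ 2 + (1 / (c * Real.log x) - 1 / Real.log x) / W)))
          * (Real.log x / x)) atTop (𝓝 (2 / κ ^ 2 * E * (1 / c - 1))) := by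
  have hlim : Tendsto (fun x : ℝ => 2 / κ ^ 2 * E * (1 / c - 1)
      + 2 / κ ^ 2 * E * W / c ^ 2 * (Real.log x)⁻¹) atTop (𝓝 (2 / κ ^ 2 * E * (1 / c - 1))) := by
    simpa using (Real.tendsto_log_atTop.inv_tendsto_atTop.const_mul
      (2 / κ ^ 2 * E * W / c ^ 2)).const_add (2 / κ ^ 2 * E * (1 / c - 1))
  refine hlim.congr' ?_
  filter_upwards [eventually_gt_atTop 1] with x hx
  have hx₀ : x ≠ 0 := by linarith
  have hlog : Real.log x ≠ 0 := (Real.log_pos hx).ne'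
  field_simp
  ring

lemma tendsto_sieve_remainder {s : ℝ} (hs : 0 < s) (W : ℝ) :
    Tendsto (fun x : ℝ => x * x ^ (-s) * (W * (1 + Real.log x)) * (Real.log x / x))
      atTop (𝓝 0) := by
  have hlim : Tendsto (fun x : ℝ => W * (x ^ (-s) * Real.log x
      + (x ^ (-(s / 2)) * Real.log x) ^ 2)) atTop (𝓝 0) := by
    simpa using ((tendsto_rpow_neg_mul_log hs).add
      ((tendsto_rpow_neg_mul_log (half_pos hs)).pow 2)).const_mul W
  refine hlim.congr' ?_
  filter_upwards [eventually_gt_atTop 0] with x hx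
  have hsq : (x ^ (-(s / 2))) ^ 2 = x ^ (-s) := by
    rw [← Real.rpow_mul_natCast hx.le]
    congr 1
    push_cast
    ring
  rw [mul_pow, hsq]
  field_simp

-- Primes up to `x ^ (9 / 10)` are negligible; for the others the largest prime factor of `p - 1`
-- exceeds `x ^ (9 / 10 * c)`, hence the sieving level `x ^ (1 / 2)`.
theorem eventually_T_le (hc : 5 / 9 < c) (hc₁ : c ≤ 1) (hB : 8 * (1 / c - 1) < B) :
    ∀ᶠ x : ℝ in atTop, (T c x : ℝ) ≤ B * (x / Real.log x) := by
  have hc₀ : 0 < c := by linarith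
  obtain ⟨η, hη₀, hη₁, hηB⟩ := exists_mul_exp_mul_lt hB
  obtain ⟨w, W, hw, hwη, hW, hpW, hpow⟩ := exists_sieve_modulus hη₀
  have hk : 0 ≤ 1 / c - 1 := sub_nonneg.2 (one_le_one_div hc₀ hc₁)
  have hmain : 2 / (1 / 2 - η) ^ 2 * Real.exp (4 / w) * (1 / c - 1) < B :=
    lt_of_le_of_lt (by gcongr) hηB
  have hlim := ((tendsto_ceil_rpow_add_one_mul_log_div (s := 9 / 10) (by norm_num)).add
    ((tendsto_sieve_main_term (κ := 1 / 2 - η) (E := Real.exp (4 / w)) hc₀.ne'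
      (Nat.cast_ne_zero (R := ℝ).2 hW.ne')).add
        (tendsto_sieve_remainder (mul_pos hc₀ hη₀) W))).eventually_le_const
          (by simpa using hmain)
  have hhalf := (tendsto_rpow_atTop (one_half_pos (α := ℝ))).eventually_ge_atTop (W : ℝ)
  have htwo := (tendsto_rpow_atTop (y := 9 / 10) (by norm_num)).eventually_ge_atTop (2 : ℝ)
  filter_upwards [hlim, hhalf, htwo, Real.tendsto_log_atTop.eventually_ge_atTop (3 / c),
    eventually_gt_atTop 1] with x hBx hWx hx₂ hlog hx
  have hx₀ : 0 < x := by linarith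
  have hM : x ^ (9 / 10 : ℝ) ≤ ⌈x ^ (9 / 10 : ℝ)⌉₊ := Nat.le_ceil _
  have hxM : x ^ (1 / 2 : ℝ) < (⌈x ^ (9 / 10 : ℝ)⌉₊ : ℝ) ^ c :=
    calc x ^ (1 / 2 : ℝ) < x ^ (9 / 10 * c) := Real.rpow_lt_rpow_of_exponent_lt hx (by linarith)
      _ = (x ^ (9 / 10 : ℝ)) ^ c := Real.rpow_mul hx₀.le _ _
      _ ≤ _ := by gcongr
  have hT := T_le hx hc₀ hc₁ ((div_le_iff₀' hc₀).1 hlog) hW hw hη₀ hη₁ hpW hpow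
    (mod_cast hx₂.trans hM) hxM (hWx.trans_lt hxM)
  have hratio : 0 < Real.log x / x := div_pos (Real.log_pos hx) hx₀
  rw [← add_mul, ← add_mul, ← le_div_iff₀ hratio, div_div_eq_mul_div,
    mul_div_assoc B] at hBx
  exact hT.trans hBx

end Asymptotics

lemma primePi_eq_primeCounting (x : ℝ) : primePi x = Nat.primeCounting ⌊x⌋₊ := by
  rw [Nat.primeCounting, Nat.primeCounting', Nat.count_eq_card_filter_range, primePi]

lemma T_le_primePi (c x : ℝ) : T c x ≤ primePi x :=
  card_le_card (monotone_filter_right _ fun _ _ hp => hp.1)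

theorem limsup_T_div_pi_lt_half_general {c B : ℝ} (hc₀ : 0 < c) (hc₁ : c ≤ 1)
    (hB : 8 * (1 / c - 1) < B) :
    ∃ x₀ : ℝ, ∀ x ≥ x₀, (T c x : ℝ) ≤ B * (primePi x : ℝ) := by
  rw [← Filter.eventually_atTop]
  have hk : 0 ≤ 1 / c - 1 := sub_nonneg.2 (one_le_one_div hc₀ hc₁)
  rcases le_or_gt c (5 / 9) with hc | hc
  · have hc' : 9 / 5 ≤ 1 / c := by
      rw [le_div_iff₀ hc₀]
      linarith
    exact .of_forall fun x => calc (T c x : ℝ) ≤ primePi x := mod_cast T_le_primePi c x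
      _ ≤ B * primePi x := le_mul_of_one_le_left (Nat.cast_nonneg _) (by linarith)
  obtain ⟨B', hB', hBB'⟩ := exists_between hB
  have hB₀ : 0 < B := by linarith
  have hε : 0 < 1 - B' / B := sub_pos.2 ((div_lt_one hB₀).2 hBB')
  filter_upwards [eventually_T_le hc hc₁ hB', eventually_le_primeCounting hε] with x hT hπ
  rw [sub_sub_cancel] at hπ
  calc (T c x : ℝ) ≤ B' * (x / Real.log x) := hT
    _ = B * (B' / B * (x / Real.log x)) := by
        rw [← mul_assoc, mul_div_cancel₀ _ hB₀.ne']
    _ ≤ B * primePi x := by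
        rw [primePi_eq_primeCounting]
        gcongr

/-- For `16/17 < c < 1`, `limsup_{x→∞} T_c(x)/π(x) < 1/2`. -/
theorem limsup_T_div_pi_lt_half (c : ℝ) (hc1 : 16 / 17 < c) (hc2 : c < 1) :
    ∃ δ : ℝ, 0 < δ ∧ ∃ x₀ : ℝ, ∀ x ≥ x₀,
      (T c x : ℝ) ≤ (1 / 2 - δ) * (primePi x : ℝ) := by
  have hc₀ : 0 < c := by linarith
  have hc' : 1 / c < 17 / 16 := by
    rw [div_lt_iff₀ hc₀]
    linarith
  obtain ⟨B, hB, hB₂⟩ := exists_between (show 8 * (1 / c - 1) < 1 / 2 by linarith)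
  exact ⟨1 / 2 - B, sub_pos.2 hB₂, by
    simpa only [sub_sub_cancel] using limsup_T_div_pi_lt_half_general hc₀ hc2.le hB⟩
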